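/- arXiv:1605.07473 — 4 statements merged into one kernel-verified Lean document; each statement's English description precedes it below -/
import Mathlib

section
/- Let $g \ge 2$ and $d \ge 1$ be integers. Then for any Gopakumar–Vafa data $(G, n)$, the Gromov–Witten number defined by the GV expansion satisfies the abc-formula: $\sum_{m \mid d} \sum_{h=0}^{G(m)} c_{h,g}\, n_h^{(m)} \left(\tfrac{d}{m}\right)^{2g-3} \;=\; f_g^{CS} \sum_{m \mid d} n_0^{(m)} \left(\tfrac{d}{m}\right)^{2g-3} \;+\; \frac{(-1)^{g-1}}{(2g-2)!}\,\frac{1}{d} \sum_{m \ge 1} b_{d,m}\, m^{2g-2}$, where in the last sum all but finitely many of the integers $b_{d,m}$ vanish. -/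
open Finset

/-- `f_g^CS = (-1)^(g-1) B_{2g} / (2g (2g-2)!)` for `g ≥ 1`. -/
noncomputable def fCS (g : ℕ) : ℝ :=
  (-1) ^ (g - 1) * ((bernoulli (2 * g) : ℚ) : ℝ) / (2 * g * Nat.factorial (2 * g - 2))

/-- The coefficients `c_{h,g}` of the GV-to-GW conversion, for `g ≥ 2`. -/
noncomputable def cCoeff (h g : ℕ) : ℝ :=
  if h = 0 then fCS g
  else if h = 1 then 0
  else (-1) ^ (g - 1) * 2 / (Nat.factorial (2 * g - 2)) *
    ∑ k ∈ Finset.Icc 1 (h - 1),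
      (Nat.choose (2 * h - 2) (h - 1 + k) : ℝ) * (-1) ^ k * (k : ℝ) ^ (2 * g - 2)

/-- The integer coefficients `b_{d,m}` built from Gopakumar–Vafa data `(G, n)`. -/
def bCoeff (G : ℕ → ℕ) (n : ℕ → ℕ → ℤ) (d m : ℕ) : ℤ :=
  ∑ k ∈ (Nat.gcd d m).divisors,
    (-1) ^ (m / k) * (2 * (d / k) : ℤ) *
      ∑ h ∈ Finset.Icc (m / k + 1) (G (d / k)),
        (Nat.choose (2 * h - 2) (h - 1 + m / k) : ℤ) * n h (d / k)

/-!
For `h ≥ 1` the number `c_{h,g}` is the coefficient of `λ ^ (2g-2)` in `(2 sin (λ/2)) ^ (2h-2)`.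
Put `q = exp (iλ)`; then `(2 sin (λ/2)) ^ (2h-2) = ∑ j, (-1) ^ j * choose (2h-2) (h-1+j) * q ^ j`,
and the terms `j` and `-j` contribute equally to the coefficient of `λ ^ (2g-2)`. Hence
`∑ h, c_{h,g} n_h` is a weighted sum over `j ≥ 1` of `j ^ (2g-2)`. A `k`-fold cover rescales
`j` to `k * j`, because `k ^ (2g-3) * j ^ (2g-2) = (1/d) * (d/k) * (k * j) ^ (2g-2)`, and collecting
the terms with `k * j = m` for `k ∣ d` gives the sum over `k ∣ gcd d m` that defines `b_{d,m}`.
-/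

section DivisorSums

theorem divisors_gcd_eq_filter {d : ℕ} (hd : d ≠ 0) (m : ℕ) :
    (d.gcd m).divisors = {k ∈ d.divisors | k ∣ m} := by
  ext k
  simp [Nat.dvd_gcd_iff, hd]

theorem sum_divisors_mul_div_pow_succ {R : Type*} [CommSemiring R] (d p : ℕ) (f : ℕ → R) :
    ∑ m ∈ d.divisors, m * ((d / m : ℕ) : R) ^ (p + 1) * f m =
      d * ∑ m ∈ d.divisors, f m * ((d / m : ℕ) : R) ^ p := by
  rw [mul_sum]
  refine sum_congr rfl fun m hm ↦ ?_
  have cast_d : (d : R) = m * (d / m : ℕ) := by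
    rw [← Nat.cast_mul, Nat.mul_div_cancel' (Nat.dvd_of_mem_divisors hm)]
  rw [cast_d]
  ring

variable {M : Type*} [AddCommMonoid M] [TopologicalSpace M]

theorem hasSum_ite_dvd_succ {k : ℕ} (hk : k ≠ 0) {f : ℕ → M} {a : M}
    (hf : HasSum (fun j ↦ f (j + 1)) a) :
    HasSum (fun m ↦ if k ∣ m + 1 then f ((m + 1) / k) else 0) a := by
  have succ_dilate (j : ℕ) : k * (j + 1) - 1 + 1 = k * (j + 1) :=
    Nat.sub_add_cancel (Nat.mul_pos hk.pos j.succ_pos)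
  have dilate_injective : Function.Injective fun j ↦ k * (j + 1) - 1 := fun i j hij ↦ by
    have hmul : k * (i + 1) = k * (j + 1) := by
      rw [← succ_dilate i, ← succ_dilate j]
      exact congrArg (· + 1) hij
    exact Nat.succ_injective (Nat.eq_of_mul_eq_mul_left hk.pos hmul)
  rw [← dilate_injective.hasSum_iff]
  · simpa only [Function.comp_def, succ_dilate, dvd_mul_right, if_true,
      Nat.mul_div_cancel_left _ hk.pos] using hf
  · intro m hm
    refine if_neg fun ⟨j, hj⟩ ↦ hm ?_
    obtain ⟨i, rfl⟩ : ∃ i, j = i + 1 :=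
      Nat.exists_eq_succ_of_ne_zero fun hj0 ↦ by simp [hj0] at hj
    exact ⟨i, by simp [← hj]⟩

theorem hasSum_sum_divisors_gcd [ContinuousAdd M] {d : ℕ} (hd : d ≠ 0) {F : ℕ → ℕ → M}
    {s : ℕ → M} (hF : ∀ k ∈ d.divisors, HasSum (fun j ↦ F k (j + 1)) (s k)) :
    HasSum (fun m ↦ ∑ k ∈ (d.gcd (m + 1)).divisors, F k ((m + 1) / k))
      (∑ k ∈ d.divisors, s k) := by
  simp only [divisors_gcd_eq_filter hd, sum_filter]
  exact hasSum_sum fun k hk ↦ hasSum_ite_dvd_succ (Nat.pos_of_mem_divisors hk).ne' (hF k hk)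

end DivisorSums

/-- The coefficient of `q ^ j` in `∑ h ∈ [1, N], a h * (q ^ (1/2) + q ^ (-1/2)) ^ (2h-2)`. For
`N = G e` and `a h = n_h^(e)` it is the inner sum in `b_{d,m}`; the sign `(-1) ^ j` of the
substitution `q ↦ -q` is kept outside. -/
def laurentCoeff (N : ℕ) (a : ℕ → ℤ) (j : ℕ) : ℤ :=
  ∑ h ∈ Icc 1 N, ((2 * h - 2).choose (h - 1 + j) : ℤ) * a h

theorem choose_two_mul_sub_two_eq_zero {h j : ℕ} (hh : h ≠ 0) (hj : h ≤ j) :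
    (2 * h - 2).choose (h - 1 + j) = 0 :=
  Nat.choose_eq_zero_of_lt (by lia)

theorem laurentCoeff_eq_sum_Icc_succ (N : ℕ) (a : ℕ → ℤ) (j : ℕ) :
    laurentCoeff N a j = ∑ h ∈ Icc (j + 1) N, ((2 * h - 2).choose (h - 1 + j) : ℤ) * a h := by
  refine (sum_subset (Icc_subset_Icc_left (by lia)) fun h h_mem h_notMem ↦ ?_).symm
  rw [mem_Icc] at h_mem h_notMem
  rw [choose_two_mul_sub_two_eq_zero (by lia) (by lia), Nat.cast_zero, zero_mul]

theorem laurentCoeff_eq_zero {N j : ℕ} (a : ℕ → ℤ) (hj : N ≤ j) : laurentCoeff N a j = 0 := by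
  rw [laurentCoeff_eq_sum_Icc_succ, Icc_eq_empty (by lia), sum_empty]

theorem cCoeff_of_ne_zero {h : ℕ} (hh : h ≠ 0) (g : ℕ) :
    cCoeff h g = ∑ j ∈ range (h - 1), (-1) ^ (g - 1) / ((2 * g - 2).factorial : ℝ) *
      (2 * (-1) ^ (j + 1) * ((2 * h - 2).choose (h - 1 + (j + 1)) : ℝ) *
        ((j : ℝ) + 1) ^ (2 * g - 2)) := by
  rcases eq_or_ne h 1 with rfl | h_ne_one
  · simp [cCoeff]
  · rw [cCoeff, if_neg hh, if_neg h_ne_one, mul_sum, ← Ico_succ_right_eq_Icc,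
      Order.succ_eq_add_one, sum_Ico_eq_sum_range, Nat.add_sub_cancel]
    refine sum_congr rfl fun j _ ↦ ?_
    rw [add_comm 1 j, Nat.cast_succ]
    ring

theorem hasSum_cCoeff {h : ℕ} (hh : h ≠ 0) (g : ℕ) :
    HasSum (fun j : ℕ ↦ (-1) ^ (g - 1) / ((2 * g - 2).factorial : ℝ) *
      (2 * (-1) ^ (j + 1) * ((2 * h - 2).choose (h - 1 + (j + 1)) : ℝ) *
        ((j : ℝ) + 1) ^ (2 * g - 2))) (cCoeff h g) := by
  rw [cCoeff_of_ne_zero hh]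
  refine hasSum_sum_of_ne_finset_zero fun j hj ↦ ?_
  rw [mem_range] at hj
  rw [choose_two_mul_sub_two_eq_zero hh (by lia)]
  simp

theorem hasSum_laurentCoeff (N : ℕ) (a : ℕ → ℤ) (g : ℕ) :
    HasSum (fun j : ℕ ↦ (-1) ^ (g - 1) / ((2 * g - 2).factorial : ℝ) *
      (2 * (-1) ^ (j + 1) * (laurentCoeff N a (j + 1) : ℝ) * ((j : ℝ) + 1) ^ (2 * g - 2)))
      (∑ h ∈ Icc 1 N, cCoeff h g * (a h : ℝ)) := by
  have hsum := hasSum_sum fun h (hh : h ∈ Icc 1 N) ↦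
    (hasSum_cCoeff (Nat.one_le_iff_ne_zero.mp (mem_Icc.mp hh).1) g).mul_right (a h : ℝ)
  refine hsum.congr_fun fun j ↦ ?_
  simp only [laurentCoeff, Int.cast_sum, Int.cast_mul, Int.cast_natCast, mul_sum, sum_mul]
  exact sum_congr rfl fun h _ ↦ by ring

section GopakumarVafa

variable (G : ℕ → ℕ) (n : ℕ → ℕ → ℤ)

theorem bCoeff_eq_sum_laurentCoeff (d m : ℕ) :
    bCoeff G n d m = ∑ k ∈ (d.gcd m).divisors,
      (-1) ^ (m / k) * (2 * ((d / k : ℕ) : ℤ)) *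
        laurentCoeff (G (d / k)) (n · (d / k)) (m / k) := by
  simp only [bCoeff, laurentCoeff_eq_sum_Icc_succ, Int.natCast_div]

theorem bCoeff_eq_zero {d m : ℕ} (hd : d ≠ 0) (hm : ∀ k ∈ d.divisors, k * G (d / k) ≤ m) :
    bCoeff G n d m = 0 := by
  rw [bCoeff_eq_sum_laurentCoeff, divisors_gcd_eq_filter hd]
  refine sum_eq_zero fun k hk ↦ ?_
  have k_mem := (mem_filter.mp hk).1
  have G_le : G (d / k) ≤ m / k :=
    (Nat.le_div_iff_mul_le (Nat.pos_of_mem_divisors k_mem)).mpr (mul_comm k _ ▸ hm k k_mem)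
  rw [laurentCoeff_eq_zero _ G_le, mul_zero]

theorem finite_setOf_bCoeff_succ_ne_zero {d : ℕ} (hd : d ≠ 0) :
    {m : ℕ | bCoeff G n d (m + 1) ≠ 0}.Finite := by
  refine (Set.finite_Iio (d.divisors.sup fun k ↦ k * G (d / k))).subset fun m hm ↦ ?_
  refine Set.mem_Iio.mpr <| lt_of_not_ge fun sup_le ↦ hm (bCoeff_eq_zero G n hd fun k hk ↦ ?_)
  exact (Finset.sup_le_iff.mp sup_le k hk).trans m.le_succ

theorem hasSum_bCoeff {d : ℕ} (hd : d ≠ 0) (g : ℕ) :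
    HasSum (fun m : ℕ ↦ (-1) ^ (g - 1) / ((2 * g - 2).factorial : ℝ) *
      ((bCoeff G n d (m + 1) : ℝ) * ((m : ℝ) + 1) ^ (2 * g - 2)))
      (∑ m ∈ d.divisors, m * ((d / m : ℕ) : ℝ) ^ (2 * g - 2) *
        ∑ h ∈ Icc 1 (G m), cCoeff h g * (n h m : ℝ)) := by
  have hsum := hasSum_sum_divisors_gcd hd
    (F := fun k j ↦ ((d / k : ℕ) : ℝ) * (k : ℝ) ^ (2 * g - 2) *
      ((-1) ^ (g - 1) / ((2 * g - 2).factorial : ℝ) *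
        (2 * (-1) ^ j * (laurentCoeff (G (d / k)) (n · (d / k)) j : ℝ) * (j : ℝ) ^ (2 * g - 2))))
    fun k _ ↦ by
      simpa only [Nat.cast_succ] using
        (hasSum_laurentCoeff (G (d / k)) (n · (d / k)) g).mul_left _
  rw [← Nat.sum_div_divisors]
  convert hsum using 1
  · ext m
    rw [bCoeff_eq_sum_laurentCoeff, Int.cast_sum, sum_mul, mul_sum]
    refine sum_congr rfl fun k hk ↦ ?_
    have k_dvd : k ∣ m + 1 := (Nat.dvd_of_mem_divisors hk).trans (Nat.gcd_dvd_right _ _)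
    have cast_succ : (m : ℝ) + 1 = k * ((m + 1) / k : ℕ) := by
      rw [← Nat.cast_mul, Nat.mul_div_cancel' k_dvd, Nat.cast_succ]
    simp only [cast_succ, mul_pow, Int.cast_mul, Int.cast_pow, Int.cast_neg, Int.cast_one,
      Int.cast_ofNat, Int.cast_natCast]
    ring
  · refine sum_congr rfl fun k hk ↦ ?_
    rw [Nat.div_div_self (Nat.dvd_of_mem_divisors hk) hd]

end GopakumarVafa

theorem sum_range_succ_cCoeff_mul (N : ℕ) (a : ℕ → ℤ) (g : ℕ) :
    ∑ h ∈ range (N + 1), cCoeff h g * (a h : ℝ) =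
      fCS g * a 0 + ∑ h ∈ Icc 1 N, cCoeff h g * (a h : ℝ) := by
  rw [range_eq_Ico, sum_eq_sum_Ico_succ_bot N.succ_pos]
  rfl

/-- the abc-formula for Gromov–Witten numbers defined by the GV expansion. -/
theorem abc_formula (G : ℕ → ℕ) (n : ℕ → ℕ → ℤ)
    (hGV : ∀ h m : ℕ, 1 ≤ m → G m < h → n h m = 0)
    (g d : ℕ) (hg : 2 ≤ g) (hd : 1 ≤ d) :
    {m : ℕ | bCoeff G n d (m + 1) ≠ 0}.Finite ∧
    ∑ m ∈ d.divisors, ∑ h ∈ Finset.range (G m + 1),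
        cCoeff h g * (n h m : ℝ) * ((d / m : ℕ) : ℝ) ^ (2 * g - 3)
      = fCS g * ∑ m ∈ d.divisors, (n 0 m : ℝ) * ((d / m : ℕ) : ℝ) ^ (2 * g - 3)
        + (-1) ^ (g - 1) / (Nat.factorial (2 * g - 2)) * (1 / d) *
            ∑' m : ℕ, (bCoeff G n d (m + 1) : ℝ) * ((m : ℝ) + 1) ^ (2 * g - 2) := by
  have d_ne_zero : d ≠ 0 := Nat.one_le_iff_ne_zero.mp hd
  refine ⟨finite_setOf_bCoeff_succ_ne_zero G n d_ne_zero, ?_⟩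
  have pow_exponent : 2 * g - 2 = 2 * g - 3 + 1 := by lia
  have positive_genus_part :
      ∑ m ∈ d.divisors, (∑ h ∈ Icc 1 (G m), cCoeff h g * (n h m : ℝ)) *
          ((d / m : ℕ) : ℝ) ^ (2 * g - 3) =
        (-1) ^ (g - 1) / (Nat.factorial (2 * g - 2)) * (1 / d) *
          ∑' m : ℕ, (bCoeff G n d (m + 1) : ℝ) * ((m : ℝ) + 1) ^ (2 * g - 2) := by
    rw [mul_right_comm, ← tsum_mul_left, (hasSum_bCoeff G n d_ne_zero g).tsum_eq, pow_exponent,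
      sum_divisors_mul_div_pow_succ]
    field_simp
  simp_rw [← sum_mul, sum_range_succ_cCoeff_mul, add_mul, sum_add_distrib, positive_genus_part,
    mul_assoc (fCS g), mul_sum]
end

section
/- Fix a real number $t > 0$. For integers $g \ge 2$ define the genus-$g$ free energy of the resolved conifold $F_g(t) := f_g^{CS} \sum_{d=1}^{\infty} d^{2g-3} e^{-dt}$ (the series converges). Then $\lim_{g \to \infty} \; F_g(t) \cdot \dfrac{\pi\, (2\pi t)^{2g-1}}{t\, \Gamma(2g-1)} \;=\; 1$; that is, $F_g(t) \sim \frac{\Gamma(2g-1)}{(2\pi t)^{2g-1}} \cdot \frac{t}{\pi}$ as $g \to \infty$, exhibiting the instanton action $A = 2\pi t$. -/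
open Real Filter Topology

/-!
Euler's formula gives `fCS g = 2 (2g - 1) ζ(2g) / (2π)^(2g)`, and the Lipschitz formula gives
`∑_{d ≥ 1} d^k e^(-dt) = k! ∑_{n ∈ ℤ} (t - 2πin)^(-k-1)` for `Re t > 0`. Taking `k = 2g - 3`, the
normalised free energy is therefore
`ζ(2g) · (2g - 1) / (2g - 2) · ∑_{n ∈ ℤ} (t / (t - 2πin))^(2g-2)`.
In the strip `|Im t| < π` the pole of `1 / (e^t - 1)` nearest to `t` is `0`, so in the last sum, as
in the zeta series, one term is `1` and all others are powers of numbers of norm less than `1`.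
-/

theorem tendsto_tsum_pow_atTop_nhds_one {R ι : Type*} [NormedRing R] [NormOneClass R]
    [CompleteSpace R] {a : ι → R} {i₀ : ι} {k : ℕ} (h_one : a i₀ = 1)
    (h_lt : ∀ i, i ≠ i₀ → ‖a i‖ < 1) (h_sum : Summable fun i => ‖a i‖ ^ k) :
    Tendsto (fun n : ℕ => ∑' i, a i ^ n) atTop (𝓝 1) := by
  classical
  have h_le (i : ι) : ‖a i‖ ≤ 1 := by
    rcases eq_or_ne i i₀ with rfl | hi
    · rw [h_one, norm_one]
    · exact (h_lt i hi).le
  have h_term (i : ι) : Tendsto (fun n : ℕ => a i ^ n) atTop (𝓝 (if i = i₀ then 1 else 0)) := by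
    rcases eq_or_ne i i₀ with rfl | hi
    · simp [h_one]
    · simpa only [if_neg hi] using tendsto_pow_atTop_nhds_zero_of_norm_lt_one (h_lt i hi)
  have h_bound : ∀ᶠ n : ℕ in atTop, ∀ i, ‖a i ^ n‖ ≤ ‖a i‖ ^ k := by
    filter_upwards [eventually_ge_atTop k] with n hn i
    exact (norm_pow_le _ _).trans (pow_le_pow_of_le_one (norm_nonneg _) (h_le i) hn)
  simpa only [tsum_ite_eq] using tendsto_tsum_of_dominated_convergence h_sum h_term h_bound

theorem tendsto_riemannZeta_natCast_atTop :
    Tendsto (fun k : ℕ => riemannZeta k) atTop (𝓝 1) := by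
  have h_lt (n : ℕ) (hn : n ≠ 1) : ‖(1 / n : ℂ)‖ < 1 := by
    rcases Nat.eq_zero_or_pos n with rfl | hpos
    · simp
    · rw [norm_div, norm_one, Complex.norm_natCast, div_lt_one (by exact_mod_cast hpos)]
      exact_mod_cast lt_of_le_of_ne hpos hn.symm
  have h_sum : Summable fun n : ℕ => ‖(1 / n : ℂ)‖ ^ 2 := by
    simp
  refine (tendsto_tsum_pow_atTop_nhds_one (i₀ := 1) (by simp) h_lt h_sum).congr' ?_
  filter_upwards [eventually_gt_atTop 1] with k hk
  simp only [zeta_nat_eq_tsum_of_gt_one hk, one_div_pow]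

theorem fCS_eq_riemannZeta {g : ℕ} (hg : g ≠ 0) :
    (fCS g : ℂ) = 2 * (2 * g - 1) / (2 * π) ^ (2 * g) * riemannZeta (2 * g) := by
  obtain ⟨m, rfl⟩ := Nat.exists_eq_succ_of_ne_zero hg
  have h_factorial : (2 * (m + 1)).factorial = (2 * m + 2) * ((2 * m + 1) * (2 * m).factorial) :=
    rfl
  rw [riemannZeta_two_mul_nat hg, fCS, h_factorial]
  have h_ne : (2 * m + 1 : ℂ) ≠ 0 := by exact_mod_cast (2 * m).succ_ne_zero
  have h_ne' : (m + 1 : ℂ) ≠ 0 := by exact_mod_cast m.succ_ne_zero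
  simp only [Nat.succ_eq_add_one, Nat.add_sub_cancel, show 2 * (m + 1) - 2 = 2 * m by lia,
    show 2 * (m + 1) - 1 = 2 * m + 1 by lia]
  push_cast
  field_simp
  ring

theorem norm_lt_norm_sub_two_pi_I_mul_int {t : ℂ} (ht : |t.im| < π) {n : ℤ} (hn : n ≠ 0) :
    ‖t‖ < ‖t - 2 * π * Complex.I * n‖ := by
  have h_one_le : (1 : ℝ) ≤ |(n : ℝ)| := by exact_mod_cast Int.one_le_abs hn
  have h_cross : t.im * n < π * (n : ℝ) ^ 2 := calc
    t.im * n ≤ |t.im| * |(n : ℝ)| := (le_abs_self _).trans (abs_mul _ _).le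
    _ < π * |(n : ℝ)| := by gcongr
    _ ≤ π * (n : ℝ) ^ 2 := by
      rw [← sq_abs]
      gcongr
      exact le_self_pow₀ h_one_le two_ne_zero
  have h_normSq : Complex.normSq (t - 2 * π * Complex.I * n) =
      Complex.normSq t + 4 * π * (π * (n : ℝ) ^ 2 - t.im * n) := by
    simp [Complex.normSq_apply]
    ring
  refine lt_of_pow_lt_pow_left₀ 2 (norm_nonneg _) ?_
  rw [← Complex.normSq_eq_norm_sq, ← Complex.normSq_eq_norm_sq, h_normSq]
  exact lt_add_of_pos_right _ (mul_pos (by positivity) (sub_pos.mpr h_cross))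

theorem neg_two_pi_I_mul_I_mul_div_two_pi (t : ℂ) :
    -2 * π * Complex.I * (Complex.I * t / (2 * π)) = t := by
  have h_pi : (π : ℂ) ≠ 0 := by simp [pi_ne_zero]
  field_simp
  linear_combination (-t) * Complex.I_sq

theorem div_sub_two_pi_I_mul_int (t : ℂ) (n : ℤ) :
    t / (t - 2 * π * Complex.I * n) =
      (Complex.I * t / (2 * π)) / (Complex.I * t / (2 * π) + n) := by
  have h_ne : -2 * π * Complex.I ≠ 0 := by simp [pi_ne_zero]
  rw [← mul_div_mul_left _ (_ + _) h_ne, mul_add, neg_two_pi_I_mul_I_mul_div_two_pi]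
  ring_nf

theorem summable_norm_div_sub_two_pi_I_mul_int_sq (t : ℂ) :
    Summable fun n : ℤ => ‖t / (t - 2 * π * Complex.I * n)‖ ^ 2 := by
  simp_rw [div_sub_two_pi_I_mul_int]
  generalize Complex.I * t / (2 * π) = z
  refine ((EisensteinSeries.linear_right_summable z 1 le_rfl).norm.mul_left (‖z‖ ^ 2)).congr
    fun n => ?_
  simp [div_eq_mul_inv, mul_pow]

theorem summable_succ_pow_mul_cexp {t : ℂ} (ht : 0 < t.re) (k : ℕ) :
    Summable fun d : ℕ => ((d : ℂ) + 1) ^ k * Complex.exp (-((d + 1) * t)) := by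
  have h_norm : ‖Complex.exp (-t)‖ < 1 := by simpa [Complex.norm_exp] using ht
  have h_sum := summable_pow_mul_geometric_of_norm_lt_one k h_norm
  refine ((summable_nat_add_iff 1).mpr h_sum).congr fun d => ?_
  rw [← Complex.exp_nat_mul]
  push_cast
  ring_nf

/-- The Lipschitz formula, multiplied by `t ^ (k + 1)`. -/
theorem tsum_div_sub_two_pi_I_mul_int_pow {t : ℂ} (ht : 0 < t.re) {k : ℕ} (hk : 1 ≤ k) :
    ∑' n : ℤ, (t / (t - 2 * π * Complex.I * n)) ^ (k + 1) =
      t ^ (k + 1) / k.factorial *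
        ∑' d : ℕ, ((d : ℂ) + 1) ^ k * Complex.exp (-((d + 1) * t)) := by
  have hz_im : 0 < (Complex.I * t / (2 * π)).im := by
    simpa [Complex.div_im] using mul_pos ht two_pi_pos
  let z : UpperHalfPlane := ⟨Complex.I * t / (2 * π), hz_im⟩
  have hz : (z : ℂ) = Complex.I * t / (2 * π) := rfl
  have hz_mul : 2 * π * Complex.I * (z : ℂ) = -t := by
    linear_combination -neg_two_pi_I_mul_I_mul_div_two_pi t
  calc ∑' n : ℤ, (t / (t - 2 * π * Complex.I * n)) ^ (k + 1)
    _ = (z : ℂ) ^ (k + 1) * ∑' n : ℤ, 1 / ((z : ℂ) + n) ^ (k + 1) := by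
      simp_rw [div_sub_two_pi_I_mul_int, ← hz, div_pow, div_eq_mul_one_div ((z : ℂ) ^ (k + 1)),
        tsum_mul_left]
    _ = t ^ (k + 1) / k.factorial *
          ∑' d : ℕ+, (d : ℂ) ^ k * Complex.exp (2 * π * Complex.I * z) ^ (d : ℕ) := by
      rw [EisensteinSeries.qExpansion_identity_pnat hk, ← mul_assoc, ← mul_div_assoc, ← mul_pow]
      congr 3
      linear_combination -hz_mul
    _ = _ := by
      rw [hz_mul, tsum_pnat_eq_tsum_succ
        (f := fun d : ℕ => (d : ℂ) ^ k * Complex.exp (-t) ^ d)]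
      congr! 3 with d
      rw [← Complex.exp_nat_mul]
      push_cast
      ring_nf

theorem tendsto_pow_div_factorial_mul_tsum_cexp {t : ℂ} (ht : 0 < t.re) (ht_im : |t.im| < π) :
    Tendsto (fun k : ℕ => t ^ (k + 1) / k.factorial *
        ∑' d : ℕ, ((d : ℂ) + 1) ^ k * Complex.exp (-((d + 1) * t))) atTop (𝓝 1) := by
  have h_ne : t ≠ 0 := Complex.ne_zero_of_re_pos ht
  have h_lt (n : ℤ) (hn : n ≠ 0) : ‖t / (t - 2 * π * Complex.I * n)‖ < 1 := by
    have h_norm := norm_lt_norm_sub_two_pi_I_mul_int ht_im hn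
    rw [norm_div]
    exact (div_lt_one ((norm_nonneg t).trans_lt h_norm)).mpr h_norm
  have h_tsum := tendsto_tsum_pow_atTop_nhds_one (i₀ := (0 : ℤ)) (by simp [h_ne]) h_lt
    (summable_norm_div_sub_two_pi_I_mul_int_sq t)
  refine (h_tsum.comp (tendsto_add_atTop_nat 1)).congr' ?_
  filter_upwards [eventually_ge_atTop 1] with k hk
  exact tsum_div_sub_two_pi_I_mul_int_pow ht hk

theorem fCS_mul_div_Gamma {g : ℕ} (hg : 2 ≤ g) {t : ℂ} (ht : t ≠ 0) (S : ℂ) :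
    (fCS g * S) * (π * (2 * π * t) ^ (2 * g - 1)) / (t * (Real.Gamma (2 * (g : ℝ) - 1) : ℂ)) =
      riemannZeta (2 * g : ℕ) * ((2 * g - 1) / (2 * g - 2)) *
        (t ^ (2 * g - 3 + 1) / (2 * g - 3).factorial * S) := by
  obtain ⟨m, rfl⟩ := Nat.exists_eq_add_of_le' hg
  have h_Gamma : Real.Gamma (2 * (m + 2 : ℕ) - 1) = (2 * m + 2) * (2 * m + 1).factorial := by
    rw [show 2 * ((m + 2 : ℕ) : ℝ) - 1 = (2 * m + 2 : ℕ) + 1 by push_cast; ring,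
      Real.Gamma_nat_eq_factorial, Nat.factorial_succ]
    push_cast
    ring
  have h_ne : (m + 1 : ℂ) ≠ 0 := by exact_mod_cast m.succ_ne_zero
  rw [fCS_eq_riemannZeta (by lia), h_Gamma, show 2 * (m + 2) - 1 = 2 * m + 3 by lia,
    show 2 * (m + 2) - 3 = 2 * m + 1 by lia]
  push_cast
  generalize riemannZeta _ = ζ
  rw [show (2 * (m + 2) - 2 : ℂ) = 2 * (m + 1) by ring, show (2 * m + 2 : ℂ) = 2 * (m + 1) by ring]
  field_simp
  ring

theorem conifold_free_energy_growth_general {t : ℂ} (ht : 0 < t.re) (ht_im : |t.im| < π) :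
    (∀ k : ℕ, Summable (fun d : ℕ => ((d : ℂ) + 1) ^ k * Complex.exp (-((d + 1) * t)))) ∧
    Tendsto
      (fun g : ℕ =>
        (fCS g * ∑' d : ℕ, ((d : ℂ) + 1) ^ (2 * g - 3) * Complex.exp (-((d + 1) * t))) *
          (π * (2 * π * t) ^ (2 * g - 1)) / (t * (Real.Gamma (2 * (g : ℝ) - 1) : ℂ)))
      atTop (𝓝 1) := by
  refine ⟨summable_succ_pow_mul_cexp ht, ?_⟩
  have h_two_mul : Tendsto (fun g : ℕ => 2 * g) atTop atTop :=
    tendsto_id.const_mul_atTop' two_pos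
  have h_zeta := tendsto_riemannZeta_natCast_atTop.comp h_two_mul
  have h_ratio : Tendsto (fun g : ℕ => (2 * g - 1 : ℂ) / (2 * g - 2)) atTop (𝓝 1) := by
    simpa [sub_eq_neg_add] using
      tendsto_add_mul_div_add_mul_atTop_nhds (-1 : ℂ) (-2) 2 (two_ne_zero (α := ℂ))
  have h_series := (tendsto_pow_div_factorial_mul_tsum_cexp ht ht_im).comp
    ((tendsto_sub_atTop_nat 3).comp h_two_mul)
  have h_prod := (h_zeta.mul h_ratio).mul h_series
  rw [one_mul, one_mul] at h_prod
  refine h_prod.congr' ?_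
  filter_upwards [eventually_ge_atTop 2] with g hg
  exact (fCS_mul_div_Gamma hg (Complex.ne_zero_of_re_pos ht) _).symm

/-- for fixed `t > 0`, the genus-`g` free energies of the resolved conifold
`F_g(t) = f_g^CS ∑_{d ≥ 1} d^(2g-3) e^(-dt)` (convergent series) grow like
`Γ(2g-1)/(2πt)^(2g-1) · t/π` as `g → ∞`, exhibiting the instanton action `A = 2πt`. -/
theorem conifold_free_energy_growth (t : ℝ) (ht : 0 < t) :
    (∀ g : ℕ, 2 ≤ g →
      Summable (fun d : ℕ => ((d : ℝ) + 1) ^ (2 * g - 3) * Real.exp (-(((d : ℝ) + 1) * t)))) ∧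
    Tendsto
      (fun g : ℕ =>
        (fCS g * ∑' d : ℕ, ((d : ℝ) + 1) ^ (2 * g - 3) * Real.exp (-(((d : ℝ) + 1) * t))) *
          (Real.pi * (2 * Real.pi * t) ^ (2 * g - 1)) / (t * Real.Gamma (2 * (g : ℝ) - 1)))
      atTop (𝓝 1) := by
  have h := conifold_free_energy_growth_general (t := t) ht (by simpa using pi_pos)
  exact ⟨fun g _ => by exact_mod_cast h.1 (2 * g - 3),
    tendsto_ofReal_iff.mp (by exact_mod_cast h.2)⟩
end

section
/- Let $a_1 > 0$ and $a_0$ be real numbers. Then, as the integer $g \to \infty$, $f_g^{CS}\, (a_0 + a_1 g)^{2g-3} \;\sim\; \frac{\Gamma\!\left(2g - \tfrac{3}{2}\right)}{\left(\tfrac{4\pi}{e\, a_1}\right)^{2g - 3/2}} \cdot \frac{\left(\tfrac{2e}{a_1}\right)^{3/2} e^{2 a_0 / a_1}}{2 \pi^2}$, i.e. the ratio of the two sides tends to $1$. (This is the factorial growth of the resolved-conifold Gromov–Witten invariants $N_{g,d} = f_g^{CS} d^{2g-3}$ along the diagonal $d = a_0 + a_1 g$.) -/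
open Real Filter Topology

/-!
Three asymptotic equivalences are multiplied together. Euler's formula for `ζ(2g)` and `ζ(2g) → 1`
give `f_g^CS ~ 4g / (2π)^(2g)`; the limit `(1 + c/g)^(2g-3) → e^(2c)` with `c = a₀/a₁` gives
`(a₀ + a₁ g)^(2g-3) ~ e^(2a₀/a₁) (a₁ g)^(2g-3)`; and Stirling's formula, carried from factorials to
`Γ(n + s)` by Euler's limit formula, gives `Γ(2g - 3/2) ~ √(2π) (2g)^(-2) (2g/e)^(2g)`.
-/

open Asymptotics
open scoped Nat

theorem isEquivalent_log_one_add : (fun x : ℝ ↦ log (1 + x)) ~[𝓝 0] id := by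
  have hderiv : HasDerivAt (fun x : ℝ ↦ log (1 + x)) 1 0 := by
    simpa using ((hasDerivAt_id (0 : ℝ)).const_add 1).log (by simp)
  simpa [IsEquivalent, Pi.sub_def] using! hderiv.isLittleO

theorem tendsto_one_add_pow_of_tendsto_mul {ι : Type*} {l : Filter ι} {x : ι → ℝ} {k : ι → ℕ}
    {t : ℝ} (hx : Tendsto x l (𝓝 0)) (hkx : Tendsto (fun i ↦ k i * x i) l (𝓝 t)) :
    Tendsto (fun i ↦ (1 + x i) ^ k i) l (𝓝 (exp t)) := by
  have hlog : (fun i ↦ k i * log (1 + x i)) ~[l] fun i ↦ k i * x i :=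
    IsEquivalent.refl.mul (isEquivalent_log_one_add.comp_tendsto hx)
  have hpos : ∀ᶠ i in l, 0 < 1 + x i := by
    filter_upwards [hx.eventually_const_lt neg_one_lt_zero] with i hi using by linarith
  refine ((continuous_exp.tendsto t).comp (hlog.symm.tendsto_nhds hkx)).congr' ?_
  filter_upwards [hpos] with i hi
  simp only [Function.comp_apply, exp_nat_mul, exp_log hi]

theorem isEquivalent_add_mul_natCast_pow (a : ℝ) {b r : ℝ} (hb : b ≠ 0) {k : ℕ → ℕ}
    (hk : Tendsto (fun n ↦ (k n : ℝ) / n) atTop (𝓝 r)) :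
    (fun n : ℕ ↦ (a + b * n) ^ k n) ~[atTop] fun n ↦ exp (r * (a / b)) * (b * n) ^ k n := by
  have hmul : Tendsto (fun n : ℕ ↦ k n * (a / b / n)) atTop (𝓝 (r * (a / b))) :=
    (hk.mul_const (a / b)).congr fun n ↦ by ring
  have hexp : (fun n : ℕ ↦ (1 + a / b / n) ^ k n) ~[atTop] fun _ ↦ exp (r * (a / b)) :=
    (isEquivalent_const_iff_tendsto (exp_ne_zero _)).2 <|
      tendsto_one_add_pow_of_tendsto_mul (tendsto_const_div_atTop_nhds_zero_nat _) hmul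
  refine (hexp.mul (IsEquivalent.refl (u := fun n : ℕ ↦ (b * n) ^ k n))).congr_left ?_
  filter_upwards [eventually_ne_atTop 0] with n hn
  rw [Pi.mul_apply, ← mul_pow]
  congr 1
  field_simp
  ring

theorem tendsto_tsum_one_div_nat_pow :
    Tendsto (fun k : ℕ ↦ ∑' n : ℕ, 1 / (n : ℝ) ^ k) atTop (𝓝 1) := by
  have hterm (n : ℕ) :
      Tendsto (fun k : ℕ ↦ 1 / (n : ℝ) ^ k) atTop (𝓝 (if n = 1 then 1 else 0)) := by
    by_cases hn : n = 1
    · simp [hn]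
    have hinv : |(n : ℝ)⁻¹| < 1 := by
      rw [abs_of_nonneg (by positivity)]
      rcases Nat.lt_or_gt_of_ne hn with h | h
      · simp [Nat.lt_one_iff.1 h]
      · exact inv_lt_one_of_one_lt₀ (by exact_mod_cast h)
    simpa [hn] using tendsto_pow_atTop_nhds_zero_of_abs_lt_one hinv
  have hbound : ∀ᶠ k : ℕ in atTop, ∀ n : ℕ, ‖1 / (n : ℝ) ^ k‖ ≤ 1 / (n : ℝ) ^ 2 := by
    filter_upwards [eventually_ge_atTop 2] with k hk n
    rw [norm_of_nonneg (by positivity)]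
    rcases n.eq_zero_or_pos with rfl | hn
    · simp [show k ≠ 0 by omega]
    · gcongr
      exact_mod_cast hn
  simpa using tendsto_tsum_of_dominated_convergence
    (summable_one_div_nat_pow.2 one_lt_two) hterm hbound

theorem bernoulli_two_mul_eq_tsum {k : ℕ} (hk : k ≠ 0) :
    (-1) ^ (k + 1) * (bernoulli (2 * k) : ℝ) =
      (∑' n : ℕ, 1 / (n : ℝ) ^ (2 * k)) * (2 * (2 * k)! / (2 * π) ^ (2 * k)) := by
  have hpow : (2 : ℝ) ^ (2 * k) = 2 * 2 ^ (2 * k - 1) := by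
    rw [← pow_succ', Nat.sub_add_cancel (by omega)]
  rw [(hasSum_zeta_nat hk).tsum_eq, mul_pow, hpow]
  field_simp

theorem isEquivalent_bernoulli_two_mul :
    (fun k : ℕ ↦ (-1) ^ (k + 1) * (bernoulli (2 * k) : ℝ)) ~[atTop]
      fun k ↦ 2 * (2 * k)! / (2 * π) ^ (2 * k) := by
  have hzeta : (fun k : ℕ ↦ ∑' n : ℕ, 1 / (n : ℝ) ^ (2 * k)) ~[atTop] fun _ ↦ 1 :=
    (isEquivalent_const_iff_tendsto one_ne_zero).2 <|
      tendsto_tsum_one_div_nat_pow.comp (tendsto_id.const_mul_atTop' two_pos)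
  refine EventuallyEq.trans_isEquivalent ?_
    ((hzeta.mul IsEquivalent.refl).congr_right (.of_eq (funext fun k ↦ one_mul _)))
  filter_upwards [eventually_ne_atTop 0] with k hk using bernoulli_two_mul_eq_tsum hk

theorem isEquivalent_natCast_add_const (s : ℝ) :
    (fun n : ℕ ↦ n + s) ~[atTop] fun n ↦ (n : ℝ) :=
  IsEquivalent.refl.add_const_of_norm_tendsto_atTop
    (tendsto_norm_atTop_atTop.comp tendsto_natCast_atTop_atTop)

theorem Gamma_add_natCast_eq_prod {s : ℝ} (hs : 0 < s) (n : ℕ) :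
    Gamma (s + n) = Gamma s * ∏ j ∈ Finset.range n, (s + j) := by
  induction n with
  | zero => simp
  | succ n ih =>
    rw [Finset.prod_range_succ, ← mul_assoc, ← ih, Nat.cast_succ, ← add_assoc,
      Gamma_add_one (by positivity), mul_comm]

theorem isEquivalent_Gamma_natCast_add_one_of_pos {s : ℝ} (hs : 0 < s) :
    (fun n : ℕ ↦ Gamma (n + (s + 1))) ~[atTop] fun n ↦ (n : ℝ) ^ s * n ! := by
  have hΓ : Gamma s ≠ 0 := (Gamma_pos_of_pos hs).ne'
  refine IsEquivalent.symm (isEquivalent_of_tendsto_one ?_)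
  have hlim := (GammaSeq_tendsto_Gamma s).div_const (Gamma s)
  rw [div_self hΓ] at hlim
  refine hlim.congr fun n ↦ ?_
  have hprod : Gamma (n + (s + 1)) = Gamma s * ∏ j ∈ Finset.range (n + 1), (s + j) := by
    rw [← Gamma_add_natCast_eq_prod hs]
    push_cast
    ring_nf
  rw [Pi.div_apply, hprod, GammaSeq, div_div, mul_comm (Gamma s)]

theorem isEquivalent_Gamma_natCast_add_of_add_one {s : ℝ}
    (h : (fun n : ℕ ↦ Gamma (n + (s + 1))) ~[atTop] fun n ↦ (n : ℝ) ^ s * n !) :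
    (fun n : ℕ ↦ Gamma (n + s)) ~[atTop] fun n ↦ (n : ℝ) ^ (s - 1) * n ! := by
  refine ((h.div (isEquivalent_natCast_add_const s)).congr_left ?_).congr_right ?_
  · filter_upwards [tendsto_natCast_atTop_atTop.eventually_gt_atTop (-s)] with n hn
    have hne : (n : ℝ) + s ≠ 0 := by linarith
    rw [Pi.div_apply, ← add_assoc, Gamma_add_one hne, mul_div_cancel_left₀ _ hne]
  · filter_upwards [eventually_ne_atTop 0] with n hn
    rw [Pi.div_apply, rpow_sub_one (by positivity)]
    ring

theorem isEquivalent_Gamma_natCast_add (s : ℝ) :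
    (fun n : ℕ ↦ Gamma (n + s)) ~[atTop] fun n ↦ (n : ℝ) ^ (s - 1) * n ! := by
  obtain ⟨k, hk⟩ := exists_nat_gt (-s)
  induction k generalizing s with
  | zero =>
    exact isEquivalent_Gamma_natCast_add_of_add_one
      (isEquivalent_Gamma_natCast_add_one_of_pos (by simpa using hk))
  | succ k ih =>
    apply isEquivalent_Gamma_natCast_add_of_add_one
    simpa using ih (s + 1) (by push_cast at hk; linarith)

theorem isEquivalent_Gamma_natCast_add_stirling (s : ℝ) :
    (fun n : ℕ ↦ Gamma (n + s)) ~[atTop]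
      fun n ↦ √(2 * π) * (n : ℝ) ^ (s - 1 / 2) * (n / exp 1) ^ n := by
  refine ((isEquivalent_Gamma_natCast_add s).trans
    (IsEquivalent.refl.mul Stirling.factorial_isEquivalent_stirling)).congr_right ?_
  filter_upwards [eventually_gt_atTop 0] with n hn
  have hpow : (n : ℝ) ^ (s - 1 / 2) = n ^ (s - 1) * √n := by
    rw [sqrt_eq_rpow, ← rpow_add (by positivity)]
    ring_nf
  rw [Pi.mul_apply, hpow, mul_right_comm 2 (n : ℝ) π, sqrt_mul (by positivity)]
  ring

theorem fCS_eq_bernoulli_mul_div_factorial {g : ℕ} (hg : g ≠ 0) :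
    fCS g = (-1) ^ (g + 1) * (bernoulli (2 * g) : ℝ) * ((2 * g - 1) / (2 * g)!) := by
  obtain ⟨m, rfl⟩ := Nat.exists_eq_add_one_of_ne_zero hg
  have hfact : ((2 * (m + 1))! : ℝ) = 2 * (m + 1) * (2 * m + 1) * (2 * m)! := by
    rw [show 2 * (m + 1) = 2 * m + 1 + 1 by ring, Nat.factorial_succ, Nat.factorial_succ]
    push_cast
    ring
  rw [fCS, hfact, show 2 * (m + 1) - 2 = 2 * m by omega, Nat.add_sub_cancel]
  push_cast
  field_simp
  ring

theorem isEquivalent_fCS : fCS ~[atTop] fun g ↦ 4 * g / (2 * π) ^ (2 * g) := by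
  have hlinear : (fun g : ℕ ↦ 2 * (g : ℝ) - 1) ~[atTop] fun g ↦ 2 * (g : ℝ) := by
    simpa [Function.comp_def, sub_eq_add_neg] using
      (isEquivalent_natCast_add_const (-1)).comp_tendsto (tendsto_id.const_mul_atTop' two_pos)
  have hprod := isEquivalent_bernoulli_two_mul.mul
    (hlinear.div (IsEquivalent.refl (u := fun g : ℕ ↦ ((2 * g)! : ℝ))))
  refine (hprod.congr_left ?_).congr_right (.of_eq (funext fun g ↦ ?_))
  · filter_upwards [eventually_ne_atTop 0] with g hg
    exact (fCS_eq_bernoulli_mul_div_factorial hg).symm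
  · simp only [Pi.mul_apply, Pi.div_apply]
    field_simp
    ring

theorem tendsto_natCast_mul_sub_div (a b : ℕ) :
    Tendsto (fun n : ℕ ↦ ((a * n - b : ℕ) : ℝ) / n) atTop (𝓝 a) := by
  rcases a.eq_zero_or_pos with rfl | ha
  · simp
  have hlim := (tendsto_const_div_atTop_nhds_zero_nat (b : ℝ)).const_sub (a : ℝ)
  rw [sub_zero] at hlim
  refine hlim.congr' ?_
  filter_upwards [eventually_ge_atTop b, eventually_ne_atTop 0] with n hbn hn
  rw [Nat.cast_sub (hbn.trans (Nat.le_mul_of_pos_left n ha))]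
  push_cast
  field_simp

theorem isEquivalent_fCS_mul_pow (a₀ : ℝ) {a₁ : ℝ} (ha₁ : a₁ ≠ 0) :
    (fun g : ℕ ↦ fCS g * (a₀ + a₁ * g) ^ (2 * g - 3)) ~[atTop]
      fun g ↦ 4 * exp (2 * a₀ / a₁) / (a₁ ^ 3 * g ^ 2) * (a₁ * g / (2 * π)) ^ (2 * g) := by
  have hpow := isEquivalent_add_mul_natCast_pow a₀ ha₁ (tendsto_natCast_mul_sub_div 2 3)
  refine (isEquivalent_fCS.mul hpow).congr_right ?_
  filter_upwards [eventually_ge_atTop 2] with g hg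
  have hsub : (a₁ * g) ^ (2 * g) = (a₁ * g) ^ (2 * g - 3) * (a₁ * g) ^ 3 := by
    rw [← pow_add, Nat.sub_add_cancel (by omega)]
  rw [Pi.mul_apply, div_pow, hsub, Nat.cast_two, mul_div_assoc 2 a₀ a₁]
  field_simp

theorem isEquivalent_Gamma_two_mul_sub :
    (fun g : ℕ ↦ Gamma (2 * g - 3 / 2)) ~[atTop]
      fun g ↦ √(2 * π) / (2 * g) ^ 2 * (2 * g / exp 1) ^ (2 * g) := by
  have hstirling := (isEquivalent_Gamma_natCast_add_stirling (-(3 / 2))).comp_tendsto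
    (tendsto_id.const_mul_atTop' two_pos)
  have hrpow (x : ℝ) (hx : 0 ≤ x) : x ^ (-(3 / 2) - 1 / 2 : ℝ) = (x ^ 2)⁻¹ := by
    rw [← rpow_two, ← rpow_neg hx]
    norm_num
  refine (hstirling.congr_left ?_).congr_right (.of_eq (funext fun g ↦ ?_))
  · exact .of_eq (funext fun g ↦ by simp [sub_eq_add_neg])
  · simp only [Function.comp_apply, id, hrpow _ (Nat.cast_nonneg _), Nat.cast_mul, Nat.cast_two,
      div_eq_mul_inv (√(2 * π))]

theorem sqrt_two_pi_mul_rpow_mul_rpow {a : ℝ} (ha : 0 < a) :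
    √(2 * π) * (4 * π / (exp 1 * a)) ^ (3 / 2 : ℝ) * (2 * exp 1 / a) ^ (3 / 2 : ℝ) =
      32 * π ^ 2 / a ^ 3 := by
  have hbase : 4 * π / (exp 1 * a) * (2 * exp 1 / a) = 2 * π * (2 / a) ^ 2 := by
    field_simp
    norm_num
  have hsqrt : √(2 * π * (2 / a) ^ 2) = √(2 * π) * (2 / a) := by
    rw [sqrt_mul (by positivity), sqrt_sq (by positivity)]
  rw [mul_assoc, ← mul_rpow (by positivity) (by positivity), hbase,
    show (3 / 2 : ℝ) = 1 + 1 / 2 by norm_num, rpow_add (by positivity), rpow_one, ← sqrt_eq_rpow,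
    hsqrt]
  calc √(2 * π) * (2 * π * (2 / a) ^ 2 * (√(2 * π) * (2 / a)))
      = √(2 * π) ^ 2 * (2 * π * (2 / a) ^ 3) := by ring
    _ = 32 * π ^ 2 / a ^ 3 := by
      rw [sq_sqrt (by positivity)]
      ring

theorem isEquivalent_Gamma_div_rpow (a₀ : ℝ) {a₁ : ℝ} (ha₁ : 0 < a₁) :
    (fun g : ℕ ↦ Gamma (2 * g - 3 / 2) / (4 * π / (exp 1 * a₁)) ^ (2 * g - 3 / 2 : ℝ) *
        ((2 * exp 1 / a₁) ^ (3 / 2 : ℝ) * exp (2 * a₀ / a₁) / (2 * π ^ 2))) ~[atTop]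
      fun g ↦ 4 * exp (2 * a₀ / a₁) / (a₁ ^ 3 * g ^ 2) * (a₁ * g / (2 * π)) ^ (2 * g) := by
  refine ((isEquivalent_Gamma_two_mul_sub.div IsEquivalent.refl).mul
    IsEquivalent.refl).congr_right (.of_eq (funext fun g ↦ ?_))
  have hbase : a₁ * g / (2 * π) = 2 * g / exp 1 / (4 * π / (exp 1 * a₁)) := by
    field_simp
    norm_num
  have hrpow : (4 * π / (exp 1 * a₁)) ^ (2 * g - 3 / 2 : ℝ) =
      (4 * π / (exp 1 * a₁)) ^ (2 * g) / (4 * π / (exp 1 * a₁)) ^ (3 / 2 : ℝ) := by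
    rw [rpow_sub (by positivity), ← rpow_natCast]
    push_cast
    rfl
  have hconst : √(2 * π) * (4 * π / (exp 1 * a₁)) ^ (3 / 2 : ℝ) *
      (2 * exp 1 / a₁) ^ (3 / 2 : ℝ) / (8 * π ^ 2) = 4 / a₁ ^ 3 := by
    rw [sqrt_two_pi_mul_rpow_mul_rpow ha₁]
    field_simp
    norm_num
  simp only [Pi.mul_apply, Pi.div_apply]
  calc √(2 * π) / (2 * g) ^ 2 * (2 * g / exp 1) ^ (2 * g) /
          (4 * π / (exp 1 * a₁)) ^ (2 * g - 3 / 2 : ℝ) *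
        ((2 * exp 1 / a₁) ^ (3 / 2 : ℝ) * exp (2 * a₀ / a₁) / (2 * π ^ 2))
      = √(2 * π) * (4 * π / (exp 1 * a₁)) ^ (3 / 2 : ℝ) * (2 * exp 1 / a₁) ^ (3 / 2 : ℝ) /
          (8 * π ^ 2) * (exp (2 * a₀ / a₁) / g ^ 2) *
            ((2 * g / exp 1) ^ (2 * g) / (4 * π / (exp 1 * a₁)) ^ (2 * g)) := by
        rw [hrpow]
        field_simp
        norm_num
    _ = 4 * exp (2 * a₀ / a₁) / (a₁ ^ 3 * g ^ 2) * (a₁ * g / (2 * π)) ^ (2 * g) := by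
        rw [hconst, ← div_pow, ← hbase, div_mul_div_comm]

/-- factorial growth of the resolved-conifold Gromov–Witten invariants
`N_{g,d} = f_g^CS d^(2g-3)` along the diagonal `d = a_0 + a_1 g`. -/
theorem conifold_diagonal_growth (a0 a1 : ℝ) (ha1 : 0 < a1) :
    Tendsto
      (fun g : ℕ =>
        fCS g * (a0 + a1 * g) ^ (2 * g - 3) /
          (Real.Gamma (2 * (g : ℝ) - 3 / 2) /
              (4 * Real.pi / (Real.exp 1 * a1)) ^ (2 * (g : ℝ) - 3 / 2) *
            ((2 * Real.exp 1 / a1) ^ ((3 : ℝ) / 2) * Real.exp (2 * a0 / a1) /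
              (2 * Real.pi ^ 2))))
      atTop (𝓝 1) := by
  have hequiv := (isEquivalent_fCS_mul_pow a0 ha1.ne').trans
    (isEquivalent_Gamma_div_rpow a0 ha1).symm
  refine (isEquivalent_iff_tendsto_one ?_).1 hequiv
  filter_upwards [eventually_ge_atTop 1] with g hg
  have hg' : (1 : ℝ) ≤ g := by exact_mod_cast hg
  have hGamma : 0 < Gamma (2 * (g : ℝ) - 3 / 2) := Gamma_pos_of_pos (by linarith)
  positivity
end

section
/- There exists a sequence of polynomials $(\mathcal{P}_h)_{h \ge 0}$ with rational coefficients, with $\mathcal{P}_0 = 1$ and $\deg \mathcal{P}_h \le 2h$, such that for every real number $q$ and every integer $H \ge 0$, as $x \to +\infty$, $\sqrt{2\pi}\, e^{2q - x}\, (x-1)\, (x - 2q)^{x-3} \;-\; \sum_{h=0}^{H} \Gamma\!\left(x - \tfrac{3}{2} - h\right) 2^{-h}\, \mathcal{P}_h(q) \;=\; O\!\left(\Gamma\!\left(x - \tfrac{5}{2} - H\right)\right)$. -/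
open Real Filter Asymptotics Finset
open Polynomial Topology

/-!
Let `μ x = log Γ(x - 3/2) - ((x - 2) log x - x + log √(2π))` be the error of Stirling's formula.
The left-hand side of the expansion is `Γ(x - 3/2) * exp (φ q x)`, where `φ` is a combination of
`log (1 - 1/x)`, `log (1 - 2q/x)`, `x * log (1 - 2q/x) + 2q` and `μ x`. The first three have
expansions in powers of `1/x` whose coefficient at `x⁻ʰ` is a rational polynomial in `q` of degree
at most `2h`, a property stable under sums, products and composition with power series. So does `μ`:
its difference `μ x - μ (x + 1)` is elementary and `O(x⁻²)`, and expanding it in inverse rising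
factorials, which telescope, solves the difference equation for `μ` term by term. Finally
`exp (φ q x)` is re-expanded in the functions `Γ(x - 3/2 - h) / Γ(x - 3/2) ~ x⁻ʰ`.
-/

/-- The families `f q x` with `f q x = O(x⁻ᴺ)` as `x → +∞` for each fixed parameter `q`; the
implied constant may depend on `q`. -/
def invPowBigO (N : ℕ) : Submodule ℝ (ℝ → ℝ → ℝ) where
  carrier := {f | ∀ q, f q =O[atTop] fun x : ℝ => x⁻¹ ^ N}
  add_mem' hf hg q := (hf q).add (hg q)
  zero_mem' _ := isBigO_zero _ _
  smul_mem' c _ hf q := (hf q).const_mul_left c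

/-- Bivariate polynomials `p(q, y)` whose coefficient of `yʰ` has degree at most `m * h` in `q`.
The inner variable of `ℚ[X][X]` is `q`, the outer one `y` stands for `x⁻¹`. -/
def weightedPoly (m : ℕ) : Subalgebra ℚ ℚ[X][X] where
  carrier := {p | ∀ h, (p.coeff h).natDegree ≤ m * h}
  add_mem' hp hr h := by
    rw [coeff_add]
    exact natDegree_add_le_of_degree_le (hp h) (hr h)
  mul_mem' {p r} hp hr h := by
    rw [coeff_mul]
    refine natDegree_sum_le_of_forall_le _ _ fun i hi => natDegree_mul_le.trans ?_
    rw [← mem_antidiagonal.1 hi, mul_add]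
    exact add_le_add (hp i.1) (hr i.2)
  algebraMap_mem' c h := by
    rw [IsScalarTower.algebraMap_apply ℚ ℚ[X] ℚ[X][X], algebraMap_eq, coeff_C]
    split_ifs <;> simp

/-- Evaluation of a bivariate polynomial `p(q, y)` at `y = x⁻¹`. -/
noncomputable def evalInv (q x : ℝ) : ℚ[X][X] →+* ℝ :=
  eval₂RingHom (aeval q : ℚ[X] →ₐ[ℚ] ℝ).toRingHom x⁻¹

section invPowBigO

variable {M N : ℕ} {f g : ℝ → ℝ → ℝ}

lemma inv_pow_isBigO_inv_pow (hMN : M ≤ N) :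
    (fun x : ℝ => x⁻¹ ^ N) =O[atTop] fun x : ℝ => x⁻¹ ^ M := by
  refine IsBigO.of_norm_eventuallyLE ?_
  filter_upwards [eventually_ge_atTop 1] with x hx
  rw [norm_of_nonneg (by positivity)]
  exact pow_le_pow_of_le_one (by positivity) (inv_le_one_of_one_le₀ hx) hMN

lemma invPowBigO_antitone : Antitone invPowBigO := fun _ _ hMN _ hf q =>
  (hf q).trans (inv_pow_isBigO_inv_pow hMN)

lemma invPowBigO_congr (hf : f ∈ invPowBigO N) (hfg : ∀ q, f q =ᶠ[atTop] g q) :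
    g ∈ invPowBigO N :=
  fun q => (hf q).congr' (hfg q) .rfl

lemma mul_mem_invPowBigO (hf : f ∈ invPowBigO M) (hg : g ∈ invPowBigO N) :
    f * g ∈ invPowBigO (M + N) :=
  fun q => ((hf q).mul (hg q)).congr_right fun _ => (pow_add _ _ _).symm

lemma tendsto_zero_of_mem_invPowBigO (hf : f ∈ invPowBigO N) (hN : N ≠ 0) (q : ℝ) :
    Tendsto (f q) atTop (𝓝 0) :=
  (hf q).trans_tendsto (by simpa [hN] using (tendsto_inv_atTop_zero (𝕜 := ℝ)).pow N)

lemma mul_inv_pow_mem_invPowBigO (c : ℝ → ℝ) (N : ℕ) :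
    (fun q x => c q * x⁻¹ ^ N) ∈ invPowBigO N :=
  fun q => isBigO_const_mul_self (c q) _ _

lemma tendsto_eval_inv (p : ℝ[X]) : Tendsto (fun x : ℝ => p.eval x⁻¹) atTop (𝓝 (p.eval 0)) :=
  (p.continuous.tendsto 0).comp tendsto_inv_atTop_zero

lemma evalInv_eq_eval_map (p : ℚ[X][X]) (q x : ℝ) :
    evalInv q x p = (p.map (aeval q : ℚ[X] →ₐ[ℚ] ℝ).toRingHom).eval x⁻¹ :=
  eval₂_eq_eval_map _

lemma evalInv_mem_invPowBigO_zero (p : ℚ[X][X]) :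
    (fun q x => evalInv q x p) ∈ invPowBigO 0 := fun q => by
  simpa only [pow_zero, evalInv_eq_eval_map] using (tendsto_eval_inv _).isBigO_one ℝ

lemma mem_invPowBigO_zero_of_sub_evalInv_mem {p : ℚ[X][X]}
    (hfp : (fun q x => f q x - evalInv q x p) ∈ invPowBigO 0) : f ∈ invPowBigO 0 := by
  simpa [Pi.add_def] using add_mem hfp (evalInv_mem_invPowBigO_zero p)

lemma X_pow_dvd_of_eval_inv_isBigO {p : ℝ[X]} :
    ∀ {N : ℕ}, (fun x : ℝ => p.eval x⁻¹) =O[atTop] (fun x : ℝ => x⁻¹ ^ N) → X ^ N ∣ p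
  | 0, _ => by simp
  | N + 1, hp => by
    obtain ⟨r, rfl⟩ := X_pow_dvd_of_eval_inv_isBigO
      (hp.trans (inv_pow_isBigO_inv_pow N.le_succ))
    have hr : (fun x : ℝ => r.eval x⁻¹) =O[atTop] fun x : ℝ => x⁻¹ := by
      refine ((isBigO_refl (fun x : ℝ => x ^ N) atTop).mul hp).congr' ?_ ?_ <;>
        filter_upwards [eventually_gt_atTop 0] with x hx <;> simp [field, pow_succ]
    have hr0 : r.eval 0 = 0 :=
      tendsto_nhds_unique (tendsto_eval_inv r) (hr.trans_tendsto tendsto_inv_atTop_zero)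
    rw [pow_succ]
    exact mul_dvd_mul_left _ (X_dvd_iff.2 (by rwa [coeff_zero_eq_eval_zero]))

lemma eval_inv_sub_coeff_isBigO {p : ℝ[X]} {N : ℕ} (hp : X ^ N ∣ p) :
    (fun x : ℝ => p.eval x⁻¹ - p.coeff N * x⁻¹ ^ N) =O[atTop] fun x : ℝ => x⁻¹ ^ (N + 1) := by
  obtain ⟨r, rfl⟩ := hp
  have hbdd := (tendsto_eval_inv r.divX).isBigO_one ℝ
  refine (hbdd.mul (isBigO_refl (fun x : ℝ => x⁻¹ ^ (N + 1)) atTop)).congr (fun x => ?_) (by simp)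
  have hr : r.eval x⁻¹ = r.divX.eval x⁻¹ * x⁻¹ + r.coeff 0 := by
    conv_lhs => rw [← divX_mul_X_add r]
    simp
  rw [eval_mul, hr, coeff_X_pow_mul', if_pos le_rfl, Nat.sub_self, eval_pow, eval_X]
  ring

end invPowBigO

/-- The families `f q x` with an asymptotic expansion in powers of `x⁻¹`, as `x → +∞`, whose
coefficient at `x⁻ʰ` is a rational polynomial in `q` of degree at most `m * h`. The truncations at
different orders `H` are not required to be compatible. -/
def invExpandable (m : ℕ) : Subalgebra ℚ (ℝ → ℝ → ℝ) where
  carrier := {f | ∀ H, ∃ p ∈ weightedPoly m, (fun q x => f q x - evalInv q x p) ∈ invPowBigO H}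
  add_mem' {f g} hf hg H := by
    obtain ⟨p, hp, hfp⟩ := hf H
    obtain ⟨r, hr, hgr⟩ := hg H
    refine ⟨p + r, add_mem hp hr, ?_⟩
    convert add_mem hfp hgr using 1
    ext q x
    simp only [Pi.add_apply, map_add]
    ring
  mul_mem' {f g} hf hg H := by
    obtain ⟨p, hp, hfp⟩ := hf H
    obtain ⟨r, hr, hgr⟩ := hg H
    obtain ⟨s, -, hgs⟩ := hg 0
    refine ⟨p * r, mul_mem hp hr, ?_⟩
    have hg0 : g ∈ invPowBigO 0 := mem_invPowBigO_zero_of_sub_evalInv_mem hgs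
    have hleft := mul_mem_invPowBigO hfp hg0
    have hright := mul_mem_invPowBigO (evalInv_mem_invPowBigO_zero p) hgr
    rw [add_zero] at hleft
    rw [zero_add] at hright
    convert add_mem hleft hright using 1
    ext q x
    simp only [Pi.add_apply, Pi.mul_apply, map_mul]
    ring
  algebraMap_mem' c H := ⟨algebraMap ℚ _ c, algebraMap_mem _ c, by
    convert zero_mem (invPowBigO H) using 1
    ext q x
    simp [evalInv, IsScalarTower.algebraMap_apply ℚ ℚ[X] ℚ[X][X]]⟩

section invExpandable

variable {m : ℕ} {f g : ℝ → ℝ → ℝ}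

lemma invExpandable_mono : Monotone invExpandable := fun _ _ hm _ hf H =>
  let ⟨p, hp, hfp⟩ := hf H
  ⟨p, fun h => (hp h).trans (Nat.mul_le_mul_right h hm), hfp⟩

lemma invExpandable_congr (hf : f ∈ invExpandable m) (hfg : ∀ q, f q =ᶠ[atTop] g q) :
    g ∈ invExpandable m := fun H =>
  let ⟨p, hp, hfp⟩ := hf H
  ⟨p, hp, invPowBigO_congr hfp fun q => (hfg q).sub .rfl⟩

lemma mem_invPowBigO_zero_of_mem_invExpandable (hf : f ∈ invExpandable m) : f ∈ invPowBigO 0 :=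
  let ⟨_, _, hfp⟩ := hf 0
  mem_invPowBigO_zero_of_sub_evalInv_mem hfp

lemma mem_invExpandable_of_forall_approx
    (hf : ∀ H, ∃ g ∈ invExpandable m, f - g ∈ invPowBigO H) : f ∈ invExpandable m := fun H => by
  obtain ⟨g, hg, hfg⟩ := hf H
  obtain ⟨p, hp, hgp⟩ := hg H
  refine ⟨p, hp, ?_⟩
  convert add_mem hfg hgp using 1
  ext q x
  simp

lemma mul_inv_pow_mem_invExpandable {h : ℕ} {c : ℚ[X]} (hc : c.natDegree ≤ m * h) :
    (fun q x => aeval q c * x⁻¹ ^ h) ∈ invExpandable m := fun H => by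
  refine ⟨monomial h c, fun k => ?_, ?_⟩
  · rw [coeff_monomial]
    split_ifs with hk
    · rwa [← hk]
    · simp
  · convert zero_mem (invPowBigO H) using 1
    ext q x
    simp [evalInv]

lemma exists_leadingCoeff {N : ℕ} (hf : f ∈ invExpandable m) (hfN : f ∈ invPowBigO N) :
    ∃ c : ℚ[X], c.natDegree ≤ m * N ∧
      (fun q x => f q x - aeval q c * x⁻¹ ^ N) ∈ invPowBigO (N + 1) := by
  obtain ⟨p, hp, hfp⟩ := hf (N + 1)
  have hpN : (fun q x => evalInv q x p) ∈ invPowBigO N := by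
    convert sub_mem hfN (invPowBigO_antitone N.le_succ hfp) using 1
    ext q x
    simp
  refine ⟨p.coeff N, hp N, fun q => ?_⟩
  have hlead := eval_inv_sub_coeff_isBigO (X_pow_dvd_of_eval_inv_isBigO
    ((hpN q).congr_left fun x => evalInv_eq_eval_map p q x))
  refine ((hfp q).add hlead).congr_left fun x => ?_
  simp [evalInv_eq_eval_map]

lemma sub_mem_invPowBigO_one_of_tendsto {l : ℝ → ℝ} (hf : f ∈ invExpandable m)
    (hfl : ∀ q, Tendsto (f q) atTop (𝓝 (l q))) :
    (fun q x => f q x - l q) ∈ invPowBigO 1 := by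
  obtain ⟨c, -, hc⟩ := exists_leadingCoeff hf (mem_invPowBigO_zero_of_mem_invExpandable hf)
  have hcl (q : ℝ) : aeval q c = l q := by
    have hzero := tendsto_zero_of_mem_invPowBigO hc one_ne_zero q
    simp only [pow_zero, mul_one] at hzero
    exact tendsto_nhds_unique (tendsto_sub_nhds_zero_iff.1 hzero) (hfl q)
  simpa [hcl] using hc

end invExpandable

section Basis

variable {m : ℕ} {f : ℝ → ℝ → ℝ} {e : ℕ → ℝ → ℝ}

/-- A sequence `e n ~ x⁻ⁿ` of parameter-free functions such that `xⁿ * e n` has a rational expansion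
in powers of `x⁻¹`; it can replace the powers of `x⁻¹` in an asymptotic expansion. -/
structure IsInvPowBasis (e : ℕ → ℝ → ℝ) : Prop where
  isEquivalent (n : ℕ) : e n ~[atTop] fun x : ℝ => x⁻¹ ^ n
  pow_mul_mem (n : ℕ) : (fun _ x => x ^ n * e n x) ∈ invExpandable 0

lemma isEquivalent_inv_pow_iff {g : ℝ → ℝ} {n : ℕ} :
    g ~[atTop] (fun x : ℝ => x⁻¹ ^ n) ↔ Tendsto (fun x => x ^ n * g x) atTop (𝓝 1) := by
  have hne : ∀ᶠ x : ℝ in atTop, x⁻¹ ^ n ≠ 0 := by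
    filter_upwards [eventually_gt_atTop 0] with x hx
    positivity
  rw [isEquivalent_iff_tendsto_one hne]
  refine tendsto_congr fun x => ?_
  simp [div_eq_inv_mul]

lemma IsInvPowBasis.mem_invPowBigO (he : IsInvPowBasis e) (n : ℕ) :
    (fun _ => e n) ∈ invPowBigO n :=
  fun _ => (he.isEquivalent n).isBigO

lemma IsInvPowBasis.pow_mul_sub_one_mem (he : IsInvPowBasis e) (n : ℕ) :
    (fun _ x => x ^ n * e n x - 1) ∈ invPowBigO 1 :=
  sub_mem_invPowBigO_one_of_tendsto (he.pow_mul_mem n) fun _ =>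
    isEquivalent_inv_pow_iff.1 (he.isEquivalent n)

lemma mul_inv_pow_mul_pow_mul_eventuallyEq (c : ℝ) (n : ℕ) (g : ℝ → ℝ) :
    (fun x => c * x⁻¹ ^ n * (x ^ n * g x)) =ᶠ[atTop] fun x => c * g x := by
  filter_upwards [eventually_gt_atTop 0] with x hx
  rw [inv_pow]
  field_simp

lemma IsInvPowBasis.mul_mem_invExpandable (he : IsInvPowBasis e) {n : ℕ} {c : ℚ[X]}
    (hc : c.natDegree ≤ m * n) : (fun q x => aeval q c * e n x) ∈ invExpandable m :=
  invExpandable_congr (mul_mem (mul_inv_pow_mem_invExpandable hc)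
    (invExpandable_mono (Nat.zero_le m) (he.pow_mul_mem n)))
    fun q => mul_inv_pow_mul_pow_mul_eventuallyEq (aeval q c) n (e n)

lemma IsInvPowBasis.exists_sub_mem (he : IsInvPowBasis e) {N : ℕ} (hf : f ∈ invExpandable m)
    (hfN : f ∈ invPowBigO N) :
    ∃ c : ℚ[X], c.natDegree ≤ m * N ∧
      (fun q x => f q x - aeval q c * e N x) ∈ invExpandable m ∧
      (fun q x => f q x - aeval q c * e N x) ∈ invPowBigO (N + 1) := by
  obtain ⟨c, hc, hlead⟩ := exists_leadingCoeff hf hfN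
  refine ⟨c, hc, sub_mem hf (he.mul_mem_invExpandable hc), ?_⟩
  have hcorr := mul_mem_invPowBigO (mul_inv_pow_mem_invPowBigO (fun q => aeval q c) N)
    (he.pow_mul_sub_one_mem N)
  refine invPowBigO_congr (sub_mem hlead hcorr) fun q => ?_
  filter_upwards [mul_inv_pow_mul_pow_mul_eventuallyEq (aeval q c) N (e N)] with x hx
  simp only [Pi.sub_apply, Pi.mul_apply, ← hx]
  ring

theorem IsInvPowBasis.exists_expansion (he : IsInvPowBasis e) {s : ℕ}
    (hf : f ∈ invExpandable m) (hfs : f ∈ invPowBigO s) :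
    ∃ P : ℕ → ℚ[X], (∀ n, (P n).natDegree ≤ m * (n + s)) ∧ ∀ H,
      (fun q x => f q x - ∑ n ∈ range H, aeval q (P n) * e (n + s) x) ∈ invPowBigO (H + s) := by
  have step (n : ℕ) (g : ℝ → ℝ → ℝ) (hg : g ∈ invExpandable m ∧ g ∈ invPowBigO (n + s)) :=
    he.exists_sub_mem hg.1 hg.2
  choose! c hdeg hmem hbigO using step
  let remainder : ℕ → ℝ → ℝ → ℝ := fun n =>
    Nat.rec f (fun n g => fun q x => g q x - aeval q (c n g) * e (n + s) x) n
  have hrem (n : ℕ) : remainder n ∈ invExpandable m ∧ remainder n ∈ invPowBigO (n + s) := by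
    induction n with
    | zero => exact ⟨hf, by rwa [zero_add]⟩
    | succ n ih => exact ⟨hmem n _ ih, by rw [add_right_comm]; exact hbigO n _ ih⟩
  refine ⟨fun n => c n (remainder n), fun n => hdeg n _ (hrem n), fun H => ?_⟩
  convert (hrem H).2 using 1
  ext q x
  induction H with
  | zero => simp [remainder]
  | succ n ih => rw [sum_range_succ, ← sub_sub, ih]

end Basis

section Taylor

variable {m : ℕ} {f : ℝ → ℝ → ℝ} {g : ℝ → ℝ} {c : ℕ → ℚ}

/-- `g` has at `0` the asymptotic Taylor expansion `∑ c k * t ^ k` with rational coefficients. -/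
def HasRatTaylor (g : ℝ → ℝ) (c : ℕ → ℚ) : Prop :=
  ∀ n, (fun t => g t - ∑ k ∈ range n, c k * t ^ k) =O[𝓝 0] (· ^ n)

lemma HasRatTaylor.comp_sub_sum_mem (hg : HasRatTaylor g c) (hf : f ∈ invPowBigO 1) (n : ℕ) :
    (fun q x => g (f q x) - ∑ k ∈ range n, c k * f q x ^ k) ∈ invPowBigO n := fun q =>
  ((hg n).comp_tendsto (tendsto_zero_of_mem_invPowBigO hf one_ne_zero q)).trans
    (((hf q).pow n).congr_right fun x => by rw [pow_one])

lemma HasRatTaylor.comp_mem_invExpandable (hg : HasRatTaylor g c) (hf : f ∈ invExpandable m)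
    (hf1 : f ∈ invPowBigO 1) : (fun q x => g (f q x)) ∈ invExpandable m := by
  refine mem_invExpandable_of_forall_approx fun H => ⟨∑ k ∈ range H, c k • f ^ k,
    sum_mem fun k _ => Subalgebra.smul_mem _ (pow_mem hf k) _, ?_⟩
  convert hg.comp_sub_sum_mem hf1 H using 1
  ext q x
  simp [Rat.smul_def]

lemma hasRatTaylor_exp : HasRatTaylor exp fun k => 1 / k.factorial := fun n => by
  simpa [div_eq_inv_mul] using exp_sub_sum_range_isBigO_pow n

lemma eventually_abs_lt_half : ∀ᶠ t : ℝ in 𝓝 0, |t| < 1 / 2 := by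
  simpa using eventually_abs_sub_lt (0 : ℝ) (ε := 1 / 2) (by norm_num)

/- At `k = 0` the coefficient `-(0⁻¹)` is `0`, as it should be. -/
lemma hasRatTaylor_log_one_sub : HasRatTaylor (fun t => log (1 - t)) fun k => -(k : ℚ)⁻¹ := by
  rintro (_ | n)
  · have hcont : ContinuousAt (fun t : ℝ => log (1 - t)) 0 :=
      ContinuousAt.log (by fun_prop) (by norm_num)
    simpa using hcont.tendsto.isBigO_one ℝ
  refine IsBigO.of_bound 2 ?_
  filter_upwards [eventually_abs_lt_half] with t ht
  have hbound := abs_log_sub_add_sum_range_le (x := t) (by linarith) n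
  have hsum : ∑ k ∈ range (n + 1), ((-(k : ℚ)⁻¹ : ℚ) : ℝ) * t ^ k =
      -∑ k ∈ range n, t ^ (k + 1) / (k + 1) := by
    rw [sum_range_succ', ← sum_neg_distrib]
    simp [div_eq_inv_mul]
  rw [hsum, sub_neg_eq_add, add_comm, norm_eq_abs, norm_eq_abs, abs_pow]
  refine hbound.trans ?_
  rw [div_le_iff₀ (by linarith)]
  nlinarith [pow_nonneg (abs_nonneg t) (n + 1)]

lemma hasRatTaylor_inv_one_sub : HasRatTaylor (fun t => (1 - t)⁻¹) fun _ => 1 := fun n => by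
  refine IsBigO.of_bound 2 ?_
  filter_upwards [eventually_abs_lt_half] with t ht
  have ht' : 1 / 2 < 1 - t := by linarith [le_abs_self t]
  have hgeom : (1 - t)⁻¹ - ∑ k ∈ range n, ((1 : ℚ) : ℝ) * t ^ k = (1 - t)⁻¹ * t ^ n := by
    have := geom_sum_mul_neg t n
    simp only [Rat.cast_one, one_mul]
    field_simp
    linarith
  rw [hgeom, norm_mul, norm_of_nonneg (by positivity)]
  gcongr
  exact inv_le_of_inv_le₀ (by norm_num) (by linarith)

lemma mul_inv_mem_invExpandable {a : ℚ[X]} (ha : a.natDegree ≤ m) :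
    (fun q x => aeval q a * x⁻¹) ∈ invExpandable m := by
  simpa using mul_inv_pow_mem_invExpandable (h := 1) (by simpa using ha)

lemma mul_inv_mem_invPowBigO (c : ℝ → ℝ) : (fun q x => c q * x⁻¹) ∈ invPowBigO 1 := by
  simpa using mul_inv_pow_mem_invPowBigO c 1

lemma log_one_sub_mul_inv_mem_invExpandable {a : ℚ[X]} (ha : a.natDegree ≤ m) :
    (fun q x => log (1 - aeval q a * x⁻¹)) ∈ invExpandable m :=
  hasRatTaylor_log_one_sub.comp_mem_invExpandable (mul_inv_mem_invExpandable ha)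
    (mul_inv_mem_invPowBigO _)

lemma log_one_sub_mul_inv_mem_invPowBigO (a : ℝ → ℝ) :
    (fun q x => log (1 - a q * x⁻¹)) ∈ invPowBigO 1 := by
  simpa using hasRatTaylor_log_one_sub.comp_sub_sum_mem (mul_inv_mem_invPowBigO a) 1

lemma mul_log_one_sub_mul_inv_add_sum_mem (a : ℝ → ℝ) (n : ℕ) :
    (fun q x => x * log (1 - a q * x⁻¹) + a q +
      ∑ k ∈ range n, (k + 2 : ℝ)⁻¹ * a q ^ (k + 2) * x⁻¹ ^ (k + 1)) ∈ invPowBigO (n + 1) := by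
  intro q
  have hlog := hasRatTaylor_log_one_sub.comp_sub_sum_mem (mul_inv_mem_invPowBigO a) (n + 2) q
  refine ((isBigO_refl (fun x : ℝ => x) atTop).mul hlog).congr' ?_ ?_ <;>
    filter_upwards [eventually_gt_atTop 0] with x hx
  · have hterm (k : ℕ) : x * (((-((k + 2 : ℕ) : ℚ)⁻¹ : ℚ) : ℝ) * (a q * x⁻¹) ^ (k + 2)) =
        -((k + 2 : ℝ)⁻¹ * a q ^ (k + 2) * x⁻¹ ^ (k + 1)) := by
      rw [mul_pow, pow_succ' x⁻¹ (k + 1)]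
      push_cast
      field_simp
    have hlinear : x * (((-((0 + 1 : ℕ) : ℚ)⁻¹ : ℚ) : ℝ) * (a q * x⁻¹) ^ (0 + 1)) = -a q := by
      simp [field]
    have hconst : ((-((0 : ℕ) : ℚ)⁻¹ : ℚ) : ℝ) * (a q * x⁻¹) ^ 0 = 0 := by simp
    rw [sum_range_succ', sum_range_succ', hconst, add_zero, mul_sub, mul_add, hlinear, mul_sum,
      sum_congr rfl fun k _ => hterm k, sum_neg_distrib]
    ring
  · rw [pow_succ', mul_inv_cancel_left₀ hx.ne']

lemma mul_log_one_sub_mul_inv_add_mem_invExpandable {a : ℚ[X]} (ha : 2 * a.natDegree ≤ m) :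
    (fun q x => x * log (1 - aeval q a * x⁻¹) + aeval q a) ∈ invExpandable m := by
  refine mem_invExpandable_of_forall_approx fun H => ⟨-∑ k ∈ range H, fun q x =>
    aeval q (C (k + 2 : ℚ)⁻¹ * a ^ (k + 2)) * x⁻¹ ^ (k + 1), ?_, ?_⟩
  · refine neg_mem (sum_mem fun k _ => mul_inv_pow_mem_invExpandable ?_)
    refine (natDegree_C_mul_le _ _).trans (natDegree_pow_le.trans ?_)
    nlinarith [Nat.zero_le (k * a.natDegree), Nat.mul_le_mul_right (k + 1) ha]
  · convert invPowBigO_antitone H.le_succ (mul_log_one_sub_mul_inv_add_sum_mem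
      (fun q => aeval q a) H) using 1
    ext q x
    simp

end Taylor

section invProd

/-- The product `∏_{j < n} (x - a j)⁻¹`. For `a j = -j` these are the inverse rising factorials, and
for `a j = j + 1 - b` the quotients `Γ(x + b - n) / Γ(x + b)`. -/
noncomputable def invProd (a : ℕ → ℚ) (n : ℕ) (x : ℝ) : ℝ :=
  ∏ j ∈ range n, (x - a j)⁻¹

variable (a : ℕ → ℚ) (n : ℕ)

lemma pow_mul_invProd_eventuallyEq :
    (fun x : ℝ => ∏ j ∈ range n, (1 - a j * x⁻¹)⁻¹) =ᶠ[atTop] fun x => x ^ n * invProd a n x := by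
  filter_upwards [eventually_gt_atTop 0] with x hx
  have hpow : x ^ n = ∏ _j ∈ range n, x := by simp
  rw [invProd, hpow, ← prod_mul_distrib]
  refine prod_congr rfl fun j _ => ?_
  have hfactor : 1 - a j * x⁻¹ = (x - a j) / x := by field_simp
  rw [hfactor, inv_div, div_eq_mul_inv]

lemma tendsto_inv_one_sub_mul_inv (c : ℝ) :
    Tendsto (fun x : ℝ => (1 - c * x⁻¹)⁻¹) atTop (𝓝 1) := by
  simpa using ((tendsto_inv_atTop_zero.const_mul c).const_sub 1).inv₀ (by simp)

lemma invProd_isEquivalent : invProd a n ~[atTop] fun x : ℝ => x⁻¹ ^ n := by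
  have hprod := tendsto_finsetProd (range n) fun j _ => tendsto_inv_one_sub_mul_inv (a j)
  rw [prod_const_one] at hprod
  exact isEquivalent_inv_pow_iff.2 (hprod.congr' (pow_mul_invProd_eventuallyEq a n))

lemma isInvPowBasis_invProd : IsInvPowBasis (invProd a) where
  isEquivalent := invProd_isEquivalent a
  pow_mul_mem n := by
    have hfactor (j : ℕ) : (fun _ x : ℝ => (1 - a j * x⁻¹)⁻¹) ∈ invExpandable 0 := by
      simpa using hasRatTaylor_inv_one_sub.comp_mem_invExpandable
        (mul_inv_mem_invExpandable (a := C (a j)) (by simp)) (mul_inv_mem_invPowBigO _)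
    have hprod := prod_mem fun j (_ : j ∈ range n) => hfactor j
    refine invExpandable_congr hprod fun q => ?_
    simpa only [prod_fn] using pow_mul_invProd_eventuallyEq a n

lemma invProd_neg_natCast_sub_shift {x : ℝ} (hx : 0 < x) :
    invProd (fun j => -j) n x - invProd (fun j => -j) n (x + 1) =
      n * invProd (fun j => -j) (n + 1) x := by
  have hlast : invProd (fun j => -j) (n + 1) x = invProd (fun j => -j) n x * (x + n)⁻¹ := by
    simp [invProd, prod_range_succ, mul_comm]
  have hfirst : invProd (fun j => -j) (n + 1) x = invProd (fun j => -j) n (x + 1) * x⁻¹ := by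
    simp [invProd, prod_range_succ', add_assoc, add_comm (1 : ℝ), mul_comm]
  have hxn : x + n ≠ 0 := by positivity
  rw [eq_mul_inv_iff_mul_eq₀ hxn] at hlast
  rw [eq_mul_inv_iff_mul_eq₀ hx.ne'] at hfirst
  rw [← hlast, ← hfirst]
  ring

end invProd

section DifferenceEquation

lemma abs_le_of_abs_sub_succ_le {u v : ℕ → ℝ} (hu : Tendsto u atTop (𝓝 0)) (hv : ∀ n, 0 ≤ v n)
    (huv : ∀ n, |u n - u (n + 1)| ≤ v n - v (n + 1)) : |u 0| ≤ v 0 := by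
  have hpartial (n : ℕ) : |u 0 - u n| ≤ v 0 := by
    calc |u 0 - u n| = |∑ k ∈ range n, (u k - u (k + 1))| := by rw [sum_range_sub']
      _ ≤ ∑ k ∈ range n, |u k - u (k + 1)| := abs_sum_le_sum_abs _ _
      _ ≤ ∑ k ∈ range n, (v k - v (k + 1)) := sum_le_sum fun k _ => huv k
      _ = v 0 - v n := sum_range_sub' v n
      _ ≤ v 0 := sub_le_self _ (hv n)
  have hlim : Tendsto (fun n => |u 0 - u n|) atTop (𝓝 |u 0|) := by
    simpa using (hu.const_sub (u 0)).abs
  exact le_of_tendsto' hlim hpartial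

lemma inv_pow_le_two_mul_sub_shift (N : ℕ) {y : ℝ} (hy : 1 ≤ y) :
    y⁻¹ ^ (N + 2) ≤ 2 * (y⁻¹ ^ (N + 1) - (y + 1)⁻¹ ^ (N + 1)) := by
  have hy0 : 0 < y := by linarith
  have hstep : y⁻¹ ^ 2 ≤ 2 * (y⁻¹ - (y + 1)⁻¹) := by
    rw [inv_sub_inv hy0.ne' (by positivity), inv_pow, ← mul_div_assoc, le_div_iff₀ (by positivity),
      inv_mul_le_iff₀ (by positivity)]
    nlinarith
  have hpow : (y + 1)⁻¹ ^ N ≤ y⁻¹ ^ N := by gcongr; linarith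
  calc y⁻¹ ^ (N + 2) = y⁻¹ ^ N * y⁻¹ ^ 2 := pow_add _ _ _
    _ ≤ y⁻¹ ^ N * (2 * (y⁻¹ - (y + 1)⁻¹)) := by gcongr
    _ = 2 * (y⁻¹ ^ (N + 1) - y⁻¹ ^ N * (y + 1)⁻¹) := by ring
    _ ≤ 2 * (y⁻¹ ^ (N + 1) - (y + 1)⁻¹ ^ (N + 1)) := by
      rw [pow_succ (y + 1)⁻¹]
      gcongr

lemma isBigO_inv_pow_of_sub_shift {g : ℝ → ℝ} {N : ℕ}
    (hg : (fun x => g x - g (x + 1)) =O[atTop] fun x : ℝ => x⁻¹ ^ (N + 2))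
    (hlim : ∀ᶠ x in atTop, Tendsto (fun n : ℕ => g (x + n)) atTop (𝓝 0)) :
    g =O[atTop] fun x : ℝ => x⁻¹ ^ (N + 1) := by
  obtain ⟨K, hK, hbound⟩ := hg.exists_pos
  obtain ⟨x₀, hx₀⟩ := eventually_atTop.1 (hbound.bound.and (eventually_ge_atTop 1))
  refine IsBigO.of_bound (2 * K) ?_
  filter_upwards [hlim, eventually_ge_atTop x₀] with x hx hxx₀
  have hx0 : 0 < x := by linarith [(hx₀ x hxx₀).2]
  rw [norm_eq_abs, norm_of_nonneg (by positivity)]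
  have hcompare := abs_le_of_abs_sub_succ_le (v := fun n => 2 * K * (x + n)⁻¹ ^ (N + 1)) hx
    (fun n => by positivity) fun n => ?_
  · simpa using hcompare
  obtain ⟨hdiff, hone⟩ := hx₀ (x + n) (hxx₀.trans (by simp))
  rw [norm_eq_abs, norm_of_nonneg (by positivity)] at hdiff
  push_cast
  rw [← add_assoc]
  calc |g (x + n) - g (x + n + 1)| ≤ K * (x + n)⁻¹ ^ (N + 2) := hdiff
    _ ≤ K * (2 * ((x + n)⁻¹ ^ (N + 1) - (x + n + 1)⁻¹ ^ (N + 1))) := by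
      gcongr
      exact inv_pow_le_two_mul_sub_shift N hone
    _ = _ := by ring

variable {f : ℝ → ℝ → ℝ}

lemma exists_invProd_expansion_of_sub_shift {m : ℕ}
    (hf : (fun q x => f q x - f q (x + 1)) ∈ invExpandable m)
    (hf2 : (fun q x => f q x - f q (x + 1)) ∈ invPowBigO 2)
    (hlim : ∀ q, ∀ᶠ x in atTop, Tendsto (fun n : ℕ => f q (x + n)) atTop (𝓝 0)) :
    ∃ P : ℕ → ℚ[X], (∀ n, (P n).natDegree ≤ m * (n + 2)) ∧ ∀ H, (fun q x => f q x -
      ∑ n ∈ range H, aeval q (P n) * invProd (fun j => -j) (n + 1) x) ∈ invPowBigO (H + 1) := by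
  have hbasis := isInvPowBasis_invProd fun j => -j
  obtain ⟨P, hP, hexp⟩ := hbasis.exists_expansion hf hf2
  refine ⟨fun n => C (n + 1 : ℚ)⁻¹ * P n, fun n => (natDegree_C_mul_le _ _).trans (hP n),
    fun H q => isBigO_inv_pow_of_sub_shift ?_ ?_⟩
  · refine (hexp H q).congr' ?_ .rfl
    filter_upwards [eventually_gt_atTop 0] with x hx
    rw [sub_sub_sub_comm, ← sum_sub_distrib]
    congr 1
    refine sum_congr rfl fun n _ => ?_
    rw [← mul_sub, invProd_neg_natCast_sub_shift (n + 1) hx]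
    simp [field]
  · filter_upwards [hlim q] with x hx
    have hshift : Tendsto (fun n : ℕ => x + (n : ℝ)) atTop atTop :=
      tendsto_atTop_add_const_left _ _ tendsto_natCast_atTop_atTop
    have hterm (k : ℕ) := (tendsto_zero_of_mem_invPowBigO (hbasis.mem_invPowBigO (k + 1))
      k.succ_ne_zero q).comp hshift
    simpa using hx.sub (tendsto_finsetSum (range H) fun k _ =>
      (hterm k).const_mul (aeval q (C (k + 1 : ℚ)⁻¹ * P k)))

/- Solving the difference equation lowers the power of `x⁻¹` by one but keeps the degree of its
coefficient, so only the weight `0` is preserved. -/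
theorem mem_invExpandable_of_sub_shift
    (hf : (fun q x => f q x - f q (x + 1)) ∈ invExpandable 0)
    (hf2 : (fun q x => f q x - f q (x + 1)) ∈ invPowBigO 2)
    (hlim : ∀ q, ∀ᶠ x in atTop, Tendsto (fun n : ℕ => f q (x + n)) atTop (𝓝 0)) :
    f ∈ invExpandable 0 ∧ f ∈ invPowBigO 1 := by
  obtain ⟨P, hP, hexp⟩ := exists_invProd_expansion_of_sub_shift hf hf2 hlim
  have hbasis := isInvPowBasis_invProd fun j => -j
  refine ⟨mem_invExpandable_of_forall_approx fun H => ⟨∑ n ∈ range H, fun q x =>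
    aeval q (P n) * invProd (fun j => -j) (n + 1) x, ?_, ?_⟩, by simpa using hexp 0⟩
  · exact sum_mem fun n _ => hbasis.mul_mem_invExpandable (by simpa using hP n)
  · convert invPowBigO_antitone H.le_succ (hexp H) using 1
    ext q x
    simp

end DifferenceEquation

section Stirling

/-- The logarithmic error of Stirling's formula
`Γ(x + a) ≈ √(2π) * x ^ (x + a - 1/2) * exp (-x)`. -/
noncomputable def stirlingRemainder (a x : ℝ) : ℝ :=
  log (Gamma (x + a)) - ((x + a - 1 / 2) * log x - x + log √(2 * π))

lemma log_add_eq_log_add_log_one_sub {c x : ℝ} (hx : 0 < x) (hxc : 0 < x + c) :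
    log (x + c) = log x + log (1 - -c * x⁻¹) := by
  have hfactor : x + c = x * (1 - -c * x⁻¹) := by
    field_simp
    ring
  have hpos : 0 < 1 - -c * x⁻¹ := pos_of_mul_pos_right (hfactor ▸ hxc) hx.le
  rw [hfactor, log_mul hx.ne' hpos.ne']

lemma tendsto_log_factorial_sub_stirling :
    Tendsto (fun n : ℕ => log n.factorial - ((n + 1 / 2) * log n - n + log √(2 * π))) atTop
      (𝓝 0) := by
  have hlog : Tendsto (fun n => log (Stirling.stirlingSeq n) - log √π) atTop (𝓝 0) := by
    rw [tendsto_sub_nhds_zero_iff]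
    exact Stirling.tendsto_stirlingSeq_sqrt_pi.log (by positivity)
  refine hlog.congr' ?_
  filter_upwards [eventually_ne_atTop 0] with n hn
  have hn' : (n : ℝ) ≠ 0 := Nat.cast_ne_zero.2 hn
  rw [Stirling.log_stirlingSeq_formula, log_mul two_ne_zero hn', log_div hn' (exp_ne_zero 1),
    log_exp, log_sqrt (by positivity), log_sqrt (by positivity), log_mul two_ne_zero pi_ne_zero]
  ring

lemma log_Gamma_add_one {y : ℝ} (hy : 0 < y) :
    log (Gamma (y + 1)) = log (Gamma y) + log y := by
  rw [Gamma_add_one hy.ne', log_mul hy.ne' (Gamma_pos_of_pos hy).ne', add_comm]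

lemma tendsto_log_Gamma_add_sub_log_factorial {s : ℝ} (hs : 0 < s) :
    Tendsto (fun n : ℕ => log (Gamma (s + (n + 1 : ℕ))) - s * log n - log n.factorial) atTop
      (𝓝 0) := by
  have hseq := (Real.BohrMollerup.tendsto_log_gamma hs).const_sub (log (Gamma s))
  rw [sub_self] at hseq
  refine hseq.congr fun n => ?_
  have hrec : log (Gamma (s + (n + 1 : ℕ))) =
      log (Gamma s) + ∑ m ∈ range (n + 1), log (s + m) :=
    BohrMollerup.f_add_nat_eq (f := log ∘ Gamma) log_Gamma_add_one hs (n + 1)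
  rw [hrec, BohrMollerup.logGammaSeq]
  ring

lemma tendsto_stirlingRemainder_add_natCast {a x : ℝ} (hx : 0 < x + a) (hx1 : 0 < x + 1) :
    Tendsto (fun n : ℕ => stirlingRemainder a (x + n)) atTop (𝓝 0) := by
  rw [← tendsto_add_atTop_iff_nat 1]
  have hlog := (tendsto_zero_of_mem_invPowBigO (log_one_sub_mul_inv_mem_invPowBigO
    fun _ => -(x + 1)) one_ne_zero 0).comp tendsto_natCast_atTop_atTop
  have hmul := (tendsto_zero_of_mem_invPowBigO (mul_log_one_sub_mul_inv_add_sum_mem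
    (fun _ => -(x + 1)) 0) one_ne_zero 0).comp tendsto_natCast_atTop_atTop
  have hsum := ((tendsto_log_Gamma_add_sub_log_factorial hx).add
    tendsto_log_factorial_sub_stirling).sub ((hlog.const_mul (x + a + 1 / 2)).add hmul)
  simp only [mul_zero, add_zero, sub_zero] at hsum
  refine hsum.congr' ?_
  filter_upwards [eventually_gt_atTop 0] with n hn
  have hn' : (0 : ℝ) < n := Nat.cast_pos.2 hn
  have hshift := log_add_eq_log_add_log_one_sub hn' (add_pos hn' hx1)
  have harg : x + (n + 1 : ℕ) + a = x + a + (n + 1 : ℕ) := by ring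
  have hlogarg : x + (n + 1 : ℕ) = n + (x + 1) := by push_cast; ring
  rw [stirlingRemainder, harg, hlogarg, hshift]
  simp only [Function.comp_apply, range_zero, sum_empty]
  push_cast
  ring

lemma stirlingRemainder_sub_shift (a : ℝ) :
    (fun x => -log (1 - -a * x⁻¹) + (x * log (1 - -1 * x⁻¹) + -1) +
      (a + 1 / 2) * log (1 - -1 * x⁻¹)) =ᶠ[atTop]
    fun x => stirlingRemainder a x - stirlingRemainder a (x + 1) := by
  filter_upwards [eventually_gt_atTop 0, eventually_gt_atTop (-a)] with x hx hxa
  have hxa' : 0 < x + a := by linarith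
  rw [stirlingRemainder, stirlingRemainder, add_right_comm x 1 a, log_Gamma_add_one hxa',
    log_add_eq_log_add_log_one_sub hx hxa', log_add_eq_log_add_log_one_sub hx (by positivity)]
  ring

lemma stirlingRemainder_sub_shift_mem_invExpandable (a : ℚ) :
    (fun _ x => stirlingRemainder a x - stirlingRemainder a (x + 1)) ∈ invExpandable 0 := by
  have hlog (c : ℚ) : (fun _ x : ℝ => log (1 - -c * x⁻¹)) ∈ invExpandable 0 := by
    simpa using log_one_sub_mul_inv_mem_invExpandable (a := C (-c)) (by simp)
  have hmul : (fun _ x : ℝ => x * log (1 - -1 * x⁻¹) + -1) ∈ invExpandable 0 := by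
    simpa using mul_log_one_sub_mul_inv_add_mem_invExpandable (a := C (-1)) (by simp)
  refine invExpandable_congr (add_mem (add_mem (neg_mem (hlog a)) hmul)
    (Subalgebra.smul_mem _ (hlog 1) (a + 1 / 2))) fun _ => ?_
  simpa [Rat.smul_def, Pi.add_def, Pi.neg_def] using stirlingRemainder_sub_shift a

lemma stirlingRemainder_sub_shift_mem_invPowBigO (a : ℝ) :
    (fun _ x => stirlingRemainder a x - stirlingRemainder a (x + 1)) ∈ invPowBigO 2 := by
  have hlog (c : ℝ) : (fun _ x : ℝ => log (1 - -c * x⁻¹) - c * x⁻¹) ∈ invPowBigO 2 := by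
    simpa [sum_range_succ] using
      hasRatTaylor_log_one_sub.comp_sub_sum_mem (mul_inv_mem_invPowBigO fun _ => -c) 2
  have hmul := mul_log_one_sub_mul_inv_add_sum_mem (fun _ => -1) 1
  refine invPowBigO_congr (add_mem (add_mem (neg_mem (hlog a)) hmul)
    (Submodule.smul_mem _ (a + 1 / 2) (hlog 1))) fun _ =>
      .trans (.of_eq ?_) (stirlingRemainder_sub_shift a)
  ext x
  simp only [Pi.add_apply, Pi.neg_apply, Pi.smul_apply, smul_eq_mul, sum_range_one,
    Nat.cast_zero]
  ring

theorem stirlingRemainder_mem (a : ℚ) :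
    (fun _ => stirlingRemainder a) ∈ invExpandable 0 ∧
      (fun _ => stirlingRemainder a) ∈ invPowBigO 1 := by
  refine mem_invExpandable_of_sub_shift (stirlingRemainder_sub_shift_mem_invExpandable a)
    (stirlingRemainder_sub_shift_mem_invPowBigO a) fun _ => ?_
  filter_upwards [eventually_gt_atTop (-a : ℝ), eventually_gt_atTop 0] with x hxa hx
  exact tendsto_stirlingRemainder_add_natCast (by linarith) (by positivity)

end Stirling

section Gamma

lemma Gamma_add_sub_natCast_eq (b : ℚ) (h : ℕ) {x : ℝ} (hx : 0 < x + b - h) :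
    Gamma (x + b - h) = Gamma (x + b) * invProd (fun j => j + 1 - b) h x := by
  induction h with
  | zero => simp [invProd]
  | succ h ih =>
    push_cast at hx ⊢
    have hstep : Gamma (x + b - h) = (x + b - (h + 1)) * Gamma (x + b - (h + 1)) := by
      rw [← Gamma_add_one hx.ne']
      ring_nf
    have hfactor : x - ((h + 1 - b : ℚ) : ℝ) = x + b - (h + 1) := by
      push_cast
      ring
    rw [invProd, prod_range_succ, ← invProd, ← mul_assoc, ← ih (by linarith), hstep, hfactor,
      mul_right_comm, mul_inv_cancel₀ hx.ne', one_mul]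

theorem exists_Gamma_expansion (b : ℚ) {m : ℕ} {f : ℝ → ℝ → ℝ} (hf : f ∈ invExpandable m) :
    ∃ P : ℕ → ℚ[X], (∀ h, (P h).natDegree ≤ m * h) ∧
      (∀ q, Tendsto (f q) atTop (𝓝 (aeval q (P 0)))) ∧
      ∀ q (H : ℕ), (fun x => Gamma (x + b) * f q x -
          ∑ h ∈ range H, Gamma (x + b - h) * aeval q (P h)) =O[atTop]
        fun x => Gamma (x + b - H) := by
  have hbasis := isInvPowBasis_invProd fun j => j + 1 - b
  obtain ⟨P, hdeg, hexp⟩ :=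
    hbasis.exists_expansion hf (mem_invPowBigO_zero_of_mem_invExpandable hf)
  refine ⟨P, hdeg, fun q => ?_, fun q H => ?_⟩
  · rw [← tendsto_sub_nhds_zero_iff]
    simpa [invProd] using tendsto_zero_of_mem_invPowBigO (hexp 1) one_ne_zero q
  · have hratio := (isBigO_refl (fun x : ℝ => Gamma (x + b)) atTop).mul
      ((hexp H q).trans (hbasis.isEquivalent H).isBigO_symm)
    refine hratio.congr' ?_ ?_ <;> filter_upwards [eventually_gt_atTop (H - b : ℝ)] with x hx
    · rw [mul_sub, mul_sum]
      congr 1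
      refine sum_congr rfl fun h hh => ?_
      have hhH : (h : ℝ) ≤ H := Nat.cast_le.2 (mem_range.1 hh).le
      rw [Gamma_add_sub_natCast_eq b h (by linarith), add_zero]
      ring
    · rw [Gamma_add_sub_natCast_eq b H (by linarith)]

end Gamma

section Diagonal

/-- The logarithm of `√(2π) * exp (2q - x) * (x - 1) * (x - 2q) ^ (x - 3) / Γ(x - 3/2)`, arranged as
a sum of terms that vanish as `x → +∞`. -/
noncomputable def diagonalExponent (q x : ℝ) : ℝ :=
  log (1 - x⁻¹) + (x * log (1 - 2 * q * x⁻¹) + 2 * q) - 3 * log (1 - 2 * q * x⁻¹) -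
    stirlingRemainder (-3 / 2) x

lemma diagonalExponent_mem_invExpandable : diagonalExponent ∈ invExpandable 2 := by
  have hdeg : (C 2 * X : ℚ[X]).natDegree ≤ 1 := (natDegree_C_mul_le 2 X).trans natDegree_X_le
  have hone : (fun _ x : ℝ => log (1 - x⁻¹)) ∈ invExpandable 2 := by
    simpa using log_one_sub_mul_inv_mem_invExpandable (m := 2) (a := 1) (by simp)
  have hlog : (fun q x : ℝ => log (1 - 2 * q * x⁻¹)) ∈ invExpandable 2 := by
    simpa using log_one_sub_mul_inv_mem_invExpandable (hdeg.trans one_le_two)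
  have hmul : (fun q x : ℝ => x * log (1 - 2 * q * x⁻¹) + 2 * q) ∈ invExpandable 2 := by
    simpa using mul_log_one_sub_mul_inv_add_mem_invExpandable (Nat.mul_le_mul_left 2 hdeg)
  have hstirling := invExpandable_mono (Nat.zero_le 2) (stirlingRemainder_mem (-3 / 2)).1
  convert sub_mem (sub_mem (add_mem hone hmul) (Subalgebra.smul_mem _ hlog 3)) hstirling using 1
  ext q x
  simp [diagonalExponent, Rat.smul_def]

lemma diagonalExponent_mem_invPowBigO : diagonalExponent ∈ invPowBigO 1 := by
  have hone : (fun _ x : ℝ => log (1 - x⁻¹)) ∈ invPowBigO 1 := by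
    simpa using log_one_sub_mul_inv_mem_invPowBigO fun _ => 1
  have hlog := log_one_sub_mul_inv_mem_invPowBigO fun q => 2 * q
  have hmul := mul_log_one_sub_mul_inv_add_sum_mem (fun q => 2 * q) 0
  have hstirling := (stirlingRemainder_mem (-3 / 2)).2
  convert sub_mem (sub_mem (add_mem hone hmul) (Submodule.smul_mem _ 3 hlog)) hstirling using 1
  ext q x
  simp [diagonalExponent]

lemma Gamma_mul_exp_diagonalExponent_eventuallyEq (q : ℝ) :
    (fun x => Gamma (x - 3 / 2) * exp (diagonalExponent q x)) =ᶠ[atTop]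
      fun x => √(2 * π) * exp (2 * q - x) * (x - 1) * (x - 2 * q) ^ (x - 3) := by
  filter_upwards [eventually_gt_atTop (3 / 2), eventually_gt_atTop (2 * q)] with x hx hxq
  have hx0 : 0 < x := by linarith
  have hGamma : 0 < Gamma (x - 3 / 2) := Gamma_pos_of_pos (by linarith)
  have hx1 : 0 < x - 1 := by linarith
  have hxq' : 0 < x - 2 * q := by linarith
  have hlog1 := log_add_eq_log_add_log_one_sub (c := -1) hx0 hx1
  have hlogq := log_add_eq_log_add_log_one_sub (c := -(2 * q)) hx0 hxq'
  rw [← sub_eq_add_neg, neg_neg] at hlog1 hlogq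
  rw [one_mul] at hlog1
  have hexponent : log (Gamma (x - 3 / 2)) + diagonalExponent q x =
      log √(2 * π) + (2 * q - x) + log (x - 1) + log (x - 2 * q) * (x - 3) := by
    rw [diagonalExponent, stirlingRemainder, hlog1, hlogq, neg_div, ← sub_eq_add_neg]
    ring
  rw [rpow_def_of_pos hxq']
  nth_rw 1 [← exp_log hGamma]
  rw [← exp_add, hexponent, exp_add, exp_add, exp_add, exp_log (by positivity), exp_log hx1]

end Diagonal

lemma eq_one_of_forall_aeval_eq_one {p : ℚ[X]} (hp : ∀ q : ℝ, aeval q p = 1) : p = 1 := by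
  refine Polynomial.funext fun r => (algebraMap ℚ ℝ).injective ?_
  rw [← aeval_algebraMap_apply_eq_algebraMap_eval, hp, eval_one, map_one]

/-- there exists a sequence of rational polynomials `𝒫_h` with `𝒫_0 = 1` and
`deg 𝒫_h ≤ 2h` giving the all-order asymptotic expansion
`√(2π) e^(2q-x) (x-1)(x-2q)^(x-3) ∼ ∑_h Γ(x - 3/2 - h) 2^(-h) 𝒫_h(q)` as `x → +∞`. -/
theorem diagonal_asymptotic_polynomials :
    ∃ P : ℕ → Polynomial ℚ, P 0 = 1 ∧ (∀ h : ℕ, (P h).degree ≤ (2 * h : ℕ)) ∧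
      ∀ (q : ℝ) (H : ℕ),
        (fun x : ℝ =>
            Real.sqrt (2 * Real.pi) * Real.exp (2 * q - x) * (x - 1) *
                (x - 2 * q) ^ (x - 3) -
              ∑ h ∈ Finset.range (H + 1),
                Real.Gamma (x - 3 / 2 - h) * (2 : ℝ) ^ (-(h : ℝ)) *
                  Polynomial.aeval q (P h))
          =O[atTop] fun x : ℝ => Real.Gamma (x - 5 / 2 - H) := by
  have hexp := hasRatTaylor_exp.comp_mem_invExpandable diagonalExponent_mem_invExpandable
    diagonalExponent_mem_invPowBigO
  obtain ⟨P, hdeg, hlim, hP⟩ := exists_Gamma_expansion (-3 / 2) hexp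
  have hshift (x : ℝ) : x + ((-3 / 2 : ℚ) : ℝ) = x - 3 / 2 := by push_cast; ring
  simp only [hshift] at hP
  have hP0 (q : ℝ) : aeval q (P 0) = 1 := by
    refine tendsto_nhds_unique (hlim q) ?_
    simpa using (tendsto_zero_of_mem_invPowBigO diagonalExponent_mem_invPowBigO one_ne_zero q).rexp
  refine ⟨fun h => C (2 ^ h) * P h, by simpa using eq_one_of_forall_aeval_eq_one hP0,
    fun h => natDegree_le_iff_degree_le.1 ((natDegree_C_mul_le _ _).trans (hdeg h)),
    fun q H => (hP q (H + 1)).congr' ?_ (.of_eq ?_)⟩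
  · filter_upwards [Gamma_mul_exp_diagonalExponent_eventuallyEq q] with x hx
    rw [← hx]
    congr 1
    exact sum_congr rfl fun h _ => by simp [rpow_neg, mul_assoc]
  · ext x
    push_cast
    ring_nf
end
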